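/- For every nonnegative integer k, the function s ↦ Γ(s+k) ζ_{MT,2}(s, s−k, 2s+k) / Γ(s) (initially defined for Re(s) > 1 and extended meromorphically) is holomorphic at s = −ℓ for every ℓ ∈ ℕ₀. Moreover s ↦ ζ_{MT,2}(s, s−k, 2s+k) itself is holomorphic at s = −ℓ for every integer ℓ ≥ k/2. -/

import Mathlib

open Filter Topology

/-- The Mordell–Tornheim double zeta function, defined by its double series
(indexed so that `m = p.1 + 1 ≥ 1`, `n = p.2 + 1 ≥ 1`). -/
noncomputable def zetaMT (s₁ s₂ s₃ : ℂ) : ℂ :=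
  ∑' p : ℕ × ℕ, ((p.1 + 1 : ℕ) : ℂ) ^ (-s₁) * ((p.2 + 1 : ℕ) : ℂ) ^ (-s₂) *
    ((p.1 + p.2 + 2 : ℕ) : ℂ) ^ (-s₃)

/-!
For `Re s₃` large, `Γ(s₃) ζ_MT(s₁, s₂, s₃) = ∫₀^∞ Li_{s₁}(e^{-t}) Li_{s₂}(e^{-t}) t^{s₃ - 1} dt`.
As `t → 0⁺`, `Li_w(e^{-t}) = Γ(1 - w) t^{w - 1} + ∑_{j < M} ζ(w - j) (-t)^j / j! + O(t^M)`; this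
comes from the Lipschitz formula (Poisson summation) and the functional equation of `ζ`.
Substituting it for the second polylogarithm gives, on the line `(s, s - k, 2s + k)`, explicit
products of Gamma and zeta factors plus a remainder which is holomorphic as far to the left as
desired.

At `s = -ℓ` each explicit product has at most a simple pole. For `k ≤ 2ℓ` it is removed by a zero of
`1 / Γ(2s + k)` or of `Γ(2s + k + j) / Γ(2s + k)`, and for `ℓ < k` the factor `s + ℓ` of
`Γ(s + k) / Γ(s)` removes it. For `k = 0` the expansion does not hold on any strip where the series
converges, and `ζ_MT(s, s, 2s) = 2 ζ_MT(s, s - 1, 2s + 1)` reduces to `k = 1`. This requires the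
point `s = 0` for `k = 1`, where the residues of `Γ(3s - 1)` and `ζ(3s + 1)` cancel.
-/

open MeasureTheory Set

section ParametricIntegral

variable {α E : Type*} [MeasurableSpace α] {μ : Measure α} [NormedAddCommGroup E]

theorem aestronglyMeasurable_deriv_of_eventually {𝕜 : Type*} [NontriviallyNormedField 𝕜]
    [NormedSpace 𝕜 E] {f : 𝕜 → α → E} {s₀ : 𝕜}
    (hmeas : ∀ᶠ s in 𝓝 s₀, AEStronglyMeasurable (f s) μ)
    (hdiff : ∀ᵐ t ∂μ, DifferentiableAt 𝕜 (fun s => f s t) s₀) :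
    AEStronglyMeasurable (fun t => deriv (fun s => f s t) s₀) μ := by
  have hshift : ∀ᶠ h in 𝓝[≠] (0 : 𝕜), AEStronglyMeasurable (f (s₀ + h)) μ := by
    have hlim : Tendsto (fun h => s₀ + h) (𝓝[≠] 0) (𝓝 s₀) := by
      have hcont : ContinuousAt (fun h => s₀ + h) 0 := by fun_prop
      simpa [ContinuousAt] using hcont.mono_left nhdsWithin_le_nhds
    exact hlim.eventually hmeas
  obtain ⟨h, hlim, hmeas_h⟩ := exists_seq_forall_of_frequently hshift.frequently
  refine aestronglyMeasurable_of_tendsto_ae atTop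
    (f := fun n t => (h n)⁻¹ • (f (s₀ + h n) t - f s₀ t))
    (fun n => ((hmeas_h n).sub hmeas.self_of_nhds).const_smul (h n)⁻¹) ?_
  filter_upwards [hdiff] with t ht
  exact ht.hasDerivAt.tendsto_slope_zero.comp hlim

theorem differentiableAt_integral_of_dominated_loc [NormedSpace ℂ E] {f : ℂ → α → E}
    {bound : α → ℝ} {s₀ : ℂ} {V : Set ℂ} (hV : V ∈ 𝓝 s₀)
    (hmeas : ∀ s ∈ V, AEStronglyMeasurable (f s) μ)
    (hdiff : ∀ᵐ t ∂μ, DifferentiableOn ℂ (fun s => f s t) V)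
    (hbound : ∀ᵐ t ∂μ, ∀ s ∈ V, ‖f s t‖ ≤ bound t) (hint : Integrable bound μ) :
    DifferentiableAt ℂ (fun s => ∫ t, f s t ∂μ) s₀ := by
  obtain ⟨R, hR, hball⟩ := Metric.mem_nhds_iff.mp hV
  have hr : 0 < R / 2 := half_pos hR
  have hsub : ∀ s ∈ Metric.ball s₀ (R / 2), Metric.closedBall s (R / 2) ⊆ Metric.ball s₀ R :=
    fun s hs z hz => by
      rw [Metric.mem_ball] at *
      rw [Metric.mem_closedBall] at hz
      linarith [dist_triangle z s s₀]
  have hdiffAt : ∀ t, DifferentiableOn ℂ (fun s => f s t) V →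
      ∀ s ∈ Metric.ball s₀ (R / 2), DifferentiableAt ℂ (fun s => f s t) s := fun t ht s hs =>
    ht.differentiableAt <| mem_of_superset
      (Metric.isOpen_ball.mem_nhds (Metric.ball_subset_ball (half_le_self hR.le) hs)) hball
  refine (hasDerivAt_integral_of_dominated_loc_of_deriv_le
    (F' := fun s t => deriv (fun z => f z t) s) (bound := fun t => bound t / (R / 2))
    (Metric.ball_mem_nhds s₀ hr) (eventually_of_mem hV hmeas) ?_ ?_ ?_
    (hint.div_const _) ?_).2.differentiableAt
  · refine hint.mono' (hmeas s₀ (mem_of_mem_nhds hV)) ?_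
    filter_upwards [hbound] with t ht using ht s₀ (mem_of_mem_nhds hV)
  · refine aestronglyMeasurable_deriv_of_eventually (eventually_of_mem hV hmeas) ?_
    filter_upwards [hdiff] with t ht using hdiffAt t ht s₀ (Metric.mem_ball_self hr)
  · filter_upwards [hbound, hdiff] with t ht hd s hs
    refine Complex.norm_deriv_le_of_forall_mem_sphere_norm_le hr ?_ fun z hz =>
      ht z (hball (hsub s hs (Metric.sphere_subset_closedBall hz)))
    refine (hd.mono ?_).diffContOnCl
    rw [closure_ball _ hr.ne']
    exact (hsub s hs).trans hball
  · filter_upwards [hdiff] with t hd s hs using (hdiffAt t hd s hs).hasDerivAt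

end ParametricIntegral

section GammaIntegral

theorem differentiableOn_integral_cpow_mul_exp_neg_mul {a : ℂ} (ha : 0 < a.re) :
    DifferentiableOn ℂ (fun r : ℂ => ∫ t in Ioi (0 : ℝ), (t : ℂ) ^ (a - 1) * Complex.exp (-(r * t)))
      {r | 0 < r.re} := by
  intro r₀ (hr₀ : 0 < r₀.re)
  have hV : {z : ℂ | r₀.re / 2 < z.re} ∈ 𝓝 r₀ :=
    (isOpen_lt continuous_const Complex.continuous_re).mem_nhds (half_lt_self hr₀)
  refine (differentiableAt_integral_of_dominated_loc
    (bound := fun t => t ^ (a.re - 1) * Real.exp (-(r₀.re / 2) * t)) hV ?_ ?_ ?_ ?_)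
    |>.differentiableWithinAt
  · refine fun r _ => ContinuousOn.aestronglyMeasurable
      (ContinuousOn.mul (fun t ht => ?_) (by fun_prop)) measurableSet_Ioi
    exact (Complex.continuousAt_ofReal_cpow_const t _ (Or.inr (ne_of_gt ht))).continuousWithinAt
  · exact Eventually.of_forall fun t => by fun_prop
  · filter_upwards [ae_restrict_mem measurableSet_Ioi] with t (ht : 0 < t) z (hz : r₀.re / 2 < z.re)
    rw [norm_mul, Complex.norm_cpow_eq_rpow_re_of_pos ht, Complex.norm_exp]
    simp only [Complex.sub_re, Complex.one_re, Complex.neg_re, Complex.re_mul_ofReal]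
    gcongr
    nlinarith
  · exact (integrableOn_rpow_mul_exp_neg_mul_rpow (s := a.re - 1) (by linarith) one_pos
      (half_pos hr₀)).congr_fun (fun t _ => by simp) measurableSet_Ioi

/-
Both sides are holomorphic in `r` and agree for real `r`, where this is
`Complex.integral_cpow_mul_exp_neg_mul_Ioi`.
-/
theorem integral_cpow_mul_exp_neg_mul_Ioi_of_re_pos {a r : ℂ} (ha : 0 < a.re) (hr : 0 < r.re) :
    ∫ t in Ioi (0 : ℝ), (t : ℂ) ^ (a - 1) * Complex.exp (-(r * t)) =
      Complex.Gamma a * r ^ (-a) := by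
  have hopen : IsOpen {r : ℂ | 0 < r.re} := isOpen_lt continuous_const Complex.continuous_re
  have hright : DifferentiableOn ℂ (fun r : ℂ => Complex.Gamma a * r ^ (-a)) {r | 0 < r.re} :=
    fun z hz => ((differentiableAt_id.cpow_const (Or.inl hz)).const_mul _).differentiableWithinAt
  have hreal : ∀ᶠ x : ℝ in 𝓝[≠] 1,
      ∫ t in Ioi (0 : ℝ), (t : ℂ) ^ (a - 1) * Complex.exp (-((x : ℂ) * t)) =
        Complex.Gamma a * (x : ℂ) ^ (-a) := by
    filter_upwards [nhdsWithin_le_nhds (lt_mem_nhds one_pos)] with x hx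
    rw [Complex.integral_cpow_mul_exp_neg_mul_Ioi ha hx, one_div, mul_comm, Complex.inv_cpow _ _
      (by rw [Complex.arg_ofReal_of_nonneg hx.le]; exact Real.pi_pos.ne), Complex.cpow_neg]
  have hcast : Tendsto (fun x : ℝ => (x : ℂ)) (𝓝[≠] 1) (𝓝[≠] 1) := by
    refine (Complex.continuous_ofReal.continuousWithinAt.tendsto_nhdsWithin fun x hx => ?_)
    simpa using hx
  exact ((differentiableOn_integral_cpow_mul_exp_neg_mul ha).analyticOnNhd hopen)
    |>.eqOn_of_preconnected_of_frequently_eq (hright.analyticOnNhd hopen)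
    (convex_halfSpace_re_gt 0).isPreconnected (z₀ := 1) (by simp)
    (hcast.frequently hreal.frequently) hr

end GammaIntegral

section ExpPolylog

/-- The term of index `n + 1` of the series defining `expPolylog w t`. -/
noncomputable def expPolylogTerm (w : ℂ) (n : ℕ) (t : ℝ) : ℂ :=
  ((n + 1 : ℕ) : ℂ) ^ (-w) * (Real.exp (-((n + 1 : ℕ) : ℝ) * t) : ℂ)

/-- The polylogarithm `Li_w(e^{-t}) = ∑_{n ≥ 1} n^{-w} e^{-nt}` as a function of `t > 0`. Its Mellin
transform in `t` produces zeta functions, which is why the exponential variable is used. -/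
noncomputable def expPolylog (w : ℂ) (t : ℝ) : ℂ :=
  ∑' n : ℕ, expPolylogTerm w n t

theorem pow_mul_exp_neg_mul_le (p : ℕ) {x t : ℝ} (hx : 0 ≤ x) (ht : 0 < t) :
    x ^ p * Real.exp (-x * t) ≤ p.factorial * (4 / t) ^ p * Real.exp (-(3 * t / 4) * x) := by
  have hfactorial := Real.pow_div_factorial_le_exp (x * t / 4) (by positivity) p
  calc x ^ p * Real.exp (-x * t)
      = p.factorial * (4 / t) ^ p * ((x * t / 4) ^ p / p.factorial) * Real.exp (-x * t) := by
        rw [div_pow, div_pow, mul_pow]; field_simp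
    _ ≤ p.factorial * (4 / t) ^ p * Real.exp (x * t / 4) * Real.exp (-x * t) := by gcongr
    _ = p.factorial * (4 / t) ^ p * Real.exp (-(3 * t / 4) * x) := by
        rw [mul_assoc, ← Real.exp_add]; ring_nf

theorem hasSum_exp_neg_mul_succ {a : ℝ} (ha : 0 < a) :
    HasSum (fun n : ℕ => Real.exp (-a * ((n + 1 : ℕ) : ℝ)))
      (Real.exp (-a) * (1 - Real.exp (-a))⁻¹) := by
  refine ((hasSum_geometric_of_lt_one (Real.exp_pos _).le
    (Real.exp_lt_one_iff.mpr (neg_lt_zero.mpr ha))).mul_left _).congr_fun fun n => ?_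
  rw [← Real.exp_nat_mul, ← Real.exp_add]
  push_cast
  ring_nf

theorem exp_neg_mul_inv_one_sub_exp_neg_le {t : ℝ} (ht : 0 < t) :
    Real.exp (-(3 * t / 4)) * (1 - Real.exp (-(3 * t / 4)))⁻¹ ≤ 4 / t * Real.exp (-t / 2) := by
  have hlt : Real.exp (-(3 * t / 4)) < 1 := Real.exp_lt_one_iff.mpr (by linarith)
  have hquarter : t / 4 * Real.exp (-(t / 4)) ≤ 1 - Real.exp (-(3 * t / 4)) := by
    have hadd := mul_le_mul_of_nonneg_right (Real.add_one_le_exp (t / 4))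
      (Real.exp_pos (-(t / 4))).le
    rw [← Real.exp_add, add_neg_cancel, Real.exp_zero] at hadd
    have hmono : Real.exp (-(3 * t / 4)) ≤ Real.exp (-(t / 4)) := by gcongr; linarith
    linarith
  rw [← div_eq_mul_inv, div_le_iff₀ (by linarith)]
  calc Real.exp (-(3 * t / 4))
      = 4 / t * Real.exp (-t / 2) * (t / 4 * Real.exp (-(t / 4))) := by
        rw [show -(3 * t / 4) = -t / 2 + -(t / 4) by ring, Real.exp_add]; field_simp
    _ ≤ 4 / t * Real.exp (-t / 2) * (1 - Real.exp (-(3 * t / 4))) := by gcongr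

theorem summable_pow_mul_exp_neg_mul (p : ℕ) {t : ℝ} (ht : 0 < t) :
    Summable fun n : ℕ => ((n + 1 : ℕ) : ℝ) ^ p * Real.exp (-((n + 1 : ℕ) : ℝ) * t) :=
  Summable.of_nonneg_of_le (fun _ => by positivity)
    (fun n => pow_mul_exp_neg_mul_le p (Nat.cast_nonneg (n + 1)) ht)
    ((hasSum_exp_neg_mul_succ (by positivity)).summable.mul_left _)

theorem exists_tsum_pow_mul_exp_neg_mul_le (p : ℕ) : ∃ C : ℝ, ∀ t : ℝ, 0 < t →
    ∑' n : ℕ, ((n + 1 : ℕ) : ℝ) ^ p * Real.exp (-((n + 1 : ℕ) : ℝ) * t) ≤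
      C / t ^ (p + 1) * Real.exp (-t / 2) := by
  refine ⟨p.factorial * 4 ^ p * 4, fun t ht => ?_⟩
  have hgeom := (hasSum_exp_neg_mul_succ (a := 3 * t / 4) (by positivity)).mul_left
    (p.factorial * (4 / t) ^ p)
  calc ∑' n : ℕ, ((n + 1 : ℕ) : ℝ) ^ p * Real.exp (-((n + 1 : ℕ) : ℝ) * t)
      ≤ p.factorial * (4 / t) ^ p *
          (Real.exp (-(3 * t / 4)) * (1 - Real.exp (-(3 * t / 4)))⁻¹) :=
        hasSum_le (fun n => pow_mul_exp_neg_mul_le p (Nat.cast_nonneg (n + 1)) ht)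
          (summable_pow_mul_exp_neg_mul p ht).hasSum hgeom
    _ ≤ p.factorial * (4 / t) ^ p * (4 / t * Real.exp (-t / 2)) := by
        gcongr ?_ * ?_; exact exp_neg_mul_inv_one_sub_exp_neg_le ht
    _ = p.factorial * 4 ^ p * 4 / t ^ (p + 1) * Real.exp (-t / 2) := by
        rw [div_pow, pow_succ]; field_simp

theorem norm_expPolylogTerm_le {w : ℂ} {p : ℕ} (hw : -w.re ≤ p) (n : ℕ) (t : ℝ) :
    ‖expPolylogTerm w n t‖ ≤ ((n + 1 : ℕ) : ℝ) ^ p * Real.exp (-((n + 1 : ℕ) : ℝ) * t) := by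
  rw [expPolylogTerm, norm_mul, Complex.norm_natCast_cpow_of_pos (Nat.succ_pos n),
    Complex.norm_real, Real.norm_of_nonneg (Real.exp_pos _).le]
  gcongr
  rw [← Real.rpow_natCast]
  exact Real.rpow_le_rpow_of_exponent_le (by simp) (by simpa using hw)

theorem summable_norm_expPolylogTerm (w : ℂ) {t : ℝ} (ht : 0 < t) :
    Summable fun n => ‖expPolylogTerm w n t‖ := by
  obtain ⟨p, hp⟩ := exists_nat_ge (-w.re)
  exact (summable_pow_mul_exp_neg_mul p ht).of_nonneg_of_le (fun _ => norm_nonneg _)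
    (norm_expPolylogTerm_le hp · t)

theorem hasSum_expPolylog (w : ℂ) {t : ℝ} (ht : 0 < t) :
    HasSum (fun n => expPolylogTerm w n t) (expPolylog w t) :=
  (summable_norm_expPolylogTerm w ht).of_norm.hasSum

theorem exists_norm_expPolylog_le (p : ℕ) : ∃ C : ℝ, ∀ w : ℂ, -w.re ≤ p → ∀ t : ℝ, 0 < t →
    ‖expPolylog w t‖ ≤ C / t ^ (p + 1) * Real.exp (-t / 2) := by
  obtain ⟨C, hC⟩ := exists_tsum_pow_mul_exp_neg_mul_le p
  exact ⟨C, fun w hw t ht => (tsum_of_norm_bounded (summable_pow_mul_exp_neg_mul p ht).hasSum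
    (norm_expPolylogTerm_le hw · t)).trans (hC t ht)⟩

theorem hasDerivAt_expPolylogTerm (w : ℂ) (n : ℕ) (t : ℝ) :
    HasDerivAt (expPolylogTerm w n) (-expPolylogTerm (w - 1) n t) t := by
  have hexp := ((hasDerivAt_id t).const_mul (-((n + 1 : ℕ) : ℝ))).exp
  refine (hexp.ofReal_comp.const_mul (((n + 1 : ℕ) : ℂ) ^ (-w))).congr_deriv ?_
  rw [expPolylogTerm, neg_sub, sub_eq_neg_add,
    Complex.cpow_add _ _ (Nat.cast_ne_zero.mpr n.succ_ne_zero), Complex.cpow_one]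
  simp only [id, mul_one]
  push_cast
  ring

theorem hasDerivAt_expPolylog (w : ℂ) {t : ℝ} (ht : 0 < t) :
    HasDerivAt (expPolylog w) (-expPolylog (w - 1) t) t := by
  obtain ⟨p, hp⟩ := exists_nat_ge (-(w - 1).re)
  have hderiv := hasDerivAt_tsum_of_isPreconnected
    (summable_pow_mul_exp_neg_mul p (half_pos ht)) isOpen_Ioi isPreconnected_Ioi
    (fun n y _ => hasDerivAt_expPolylogTerm w n y) (fun n y (hy : t / 2 < y) => ?_)
    (half_lt_self ht) (summable_norm_expPolylogTerm w ht).of_norm (half_lt_self ht)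
  · rwa [tsum_neg] at hderiv
  · rw [norm_neg]
    refine (norm_expPolylogTerm_le hp n y).trans ?_
    gcongr ?_ * Real.exp ?_
    exact mul_le_mul_of_nonpos_left hy.le (neg_nonpos.mpr (Nat.cast_nonneg _))

theorem continuousOn_expPolylog (w : ℂ) : ContinuousOn (expPolylog w) (Ioi 0) :=
  fun _ ht => (hasDerivAt_expPolylog w ht).continuousAt.continuousWithinAt

theorem differentiable_expPolylog_left {t : ℝ} (ht : 0 < t) :
    Differentiable ℂ fun w => expPolylog w t := by
  intro w
  obtain ⟨p, hp⟩ := exists_nat_gt (-w.re)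
  have hopen : IsOpen {z : ℂ | -(p : ℝ) < z.re} := isOpen_lt continuous_const Complex.continuous_re
  refine (Complex.differentiableOn_tsum_of_summable_norm (summable_pow_mul_exp_neg_mul p ht)
    (fun n z _ => ?_) hopen fun n z (hz : -(p : ℝ) < z.re) =>
      norm_expPolylogTerm_le (neg_le.mp hz.le) n t).differentiableAt
    (hopen.mem_nhds (neg_lt.mp hp))
  exact ((differentiableAt_id.neg.const_cpow
    (Or.inl (Nat.cast_ne_zero.mpr n.succ_ne_zero))).mul_const _).differentiableWithinAt

end ExpPolylog

section LipschitzFormula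

open scoped FourierTransform

/-- The points `t + 2πin`, `n ∈ ℤ`, at which the Lipschitz formula for `expPolylog w t` evaluates
the power `z ↦ z ^ (w - 1)`. -/
noncomputable def lipschitzNode (t : ℝ) (n : ℤ) : ℂ := (t : ℂ) + 2 * Real.pi * n * Complex.I

theorem lipschitzNode_re (t : ℝ) (n : ℤ) : (lipschitzNode t n).re = t := by simp [lipschitzNode]

theorem lipschitzNode_im (t : ℝ) (n : ℤ) : (lipschitzNode t n).im = 2 * Real.pi * n := by
  simp [lipschitzNode]

theorem norm_lipschitzNode_cpow_le {w : ℂ} (hw : w.re ≤ 1) (t : ℝ) {n : ℤ} (hn : n ≠ 0) :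
    ‖lipschitzNode t n ^ (w - 1)‖ ≤ Real.exp (Real.pi * |w.im|) * |(n : ℝ)| ^ (w.re - 1) := by
  have hn' : (0 : ℝ) < |(n : ℝ)| := abs_pos.mpr (Int.cast_ne_zero.mpr hn)
  have hnorm : |(n : ℝ)| ≤ ‖lipschitzNode t n‖ := by
    refine le_trans ?_ (Complex.abs_im_le_norm _)
    rw [lipschitzNode_im, abs_mul, abs_of_pos Real.two_pi_pos]
    nlinarith [Real.pi_gt_three]
  have harg : -((lipschitzNode t n).arg * w.im) ≤ Real.pi * |w.im| := by
    refine (neg_le_abs _).trans ?_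
    rw [abs_mul]
    gcongr
    exact Complex.abs_arg_le_pi _
  rw [Complex.norm_cpow_of_ne_zero (norm_pos_iff.mp (hn'.trans_le hnorm)), div_eq_mul_inv,
    ← Real.exp_neg, mul_comm]
  simp only [Complex.sub_re, Complex.one_re, Complex.sub_im, Complex.one_im, sub_zero]
  exact mul_le_mul (Real.exp_le_exp.mpr harg)
    (Real.rpow_le_rpow_of_nonpos hn' hnorm (by linarith)) (by positivity) (by positivity)

theorem summable_lipschitzNode_cpow {w : ℂ} (hw : w.re < 0) (t : ℝ) :
    Summable fun n : ℤ => lipschitzNode t n ^ (w - 1) := by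
  refine Summable.of_norm_bounded_eventually
    ((Real.summable_abs_int_rpow (b := 1 - w.re) (by linarith)).mul_left
      (Real.exp (Real.pi * |w.im|))) ?_
  filter_upwards [(finite_singleton (0 : ℤ)).compl_mem_cofinite] with n hn
  rw [neg_sub]
  exact norm_lipschitzNode_cpow_le (by linarith) t hn

/-- The function `x ↦ x₊ ^ (-w) e^{-tx}` on the real line. Its values at the positive integers are
the terms of `expPolylog w t`, and Poisson summation applied to it gives the Lipschitz formula. -/
noncomputable def gammaKernel (w : ℂ) (t x : ℝ) : ℂ :=
  ((max x 0 : ℝ) : ℂ) ^ (-w) * (Real.exp (-t * x) : ℂ)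

theorem gammaKernel_of_nonpos {w : ℂ} (hw : w ≠ 0) (t : ℝ) {x : ℝ} (hx : x ≤ 0) :
    gammaKernel w t x = 0 := by
  rw [gammaKernel, max_eq_right hx, Complex.ofReal_zero, Complex.zero_cpow (neg_ne_zero.mpr hw),
    zero_mul]

theorem continuous_gammaKernel {w : ℂ} (hw : w.re < 0) (t : ℝ) : Continuous (gammaKernel w t) :=
  ((Complex.continuous_ofReal_cpow_const (by simpa using hw)).comp
    (continuous_id.max continuous_const)).mul (by fun_prop)

theorem isBigO_gammaKernel_rpow {w : ℂ} (hw : w ≠ 0) {t : ℝ} (ht : 0 < t) (b : ℝ) :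
    gammaKernel w t =O[cocompact ℝ] fun x : ℝ => |x| ^ b := by
  rw [cocompact_eq_atBot_atTop, Asymptotics.isBigO_sup]
  constructor
  · refine Asymptotics.IsBigO.congr' (Asymptotics.isBigO_zero _ atBot) ?_ EventuallyEq.rfl
    filter_upwards [eventually_le_atBot 0] with x hx using (gammaKernel_of_nonpos hw t hx).symm
  · have hnorm : ∀ᶠ x : ℝ in atTop, ‖gammaKernel w t x‖ = x ^ (-w.re) * Real.exp (-t * x) := by
      filter_upwards [eventually_gt_atTop 0] with x hx
      rw [gammaKernel, max_eq_left hx.le, norm_mul, Complex.norm_cpow_eq_rpow_re_of_pos hx,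
        Complex.norm_real, Real.norm_of_nonneg (Real.exp_pos _).le, Complex.neg_re]
    have hpow : ∀ᶠ x : ℝ in atTop, x ^ (-w.re) * x ^ (b + w.re) = |x| ^ b := by
      filter_upwards [eventually_gt_atTop 0] with x hx
      rw [← Real.rpow_add hx, abs_of_pos hx, neg_add_cancel_comm_assoc]
    have hexp := (isLittleO_exp_neg_mul_rpow_atTop ht (b + w.re)).isBigO
    exact .of_norm_left <|
      ((Asymptotics.isBigO_refl (fun x : ℝ => x ^ (-w.re)) atTop).mul hexp).congr'
        (hnorm.mono fun _ => Eq.symm) hpow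

theorem fourier_gammaKernel {w : ℂ} (hw : w.re < 0) {t : ℝ} (ht : 0 < t) (n : ℤ) :
    𝓕 (gammaKernel w t) (n : ℝ) = Complex.Gamma (1 - w) * lipschitzNode t n ^ (w - 1) := by
  have hw0 : w ≠ 0 := by rintro rfl; simp at hw
  have hgamma := integral_cpow_mul_exp_neg_mul_Ioi_of_re_pos (a := 1 - w)
    (r := lipschitzNode t n) (by rw [Complex.sub_re, Complex.one_re]; linarith)
    (by rwa [lipschitzNode_re])
  rw [neg_sub] at hgamma
  rw [Real.fourier_real_eq_integral_exp_smul, ← hgamma,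
    ← setIntegral_eq_integral_of_forall_compl_eq_zero (s := Ioi 0)]
  · refine setIntegral_congr_fun measurableSet_Ioi fun x (hx : 0 < x) => ?_
    simp only [gammaKernel, lipschitzNode, smul_eq_mul, max_eq_left hx.le, sub_sub_cancel_left]
    rw [mul_left_comm, Complex.ofReal_exp, ← Complex.exp_add]
    push_cast
    ring_nf
  · intro x hx
    rw [gammaKernel_of_nonpos hw0 t (by simpa using hx), smul_zero]

theorem hasSum_gammaKernel_int {w : ℂ} (hw : w ≠ 0) {t : ℝ} (ht : 0 < t) :
    HasSum (fun n : ℤ => gammaKernel w t n) (expPolylog w t) := by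
  have hinj : Function.Injective fun n : ℕ => (n : ℤ) + 1 := fun a b h => by simpa using h
  rw [← hinj.hasSum_iff]
  · refine (hasSum_expPolylog w ht).congr_fun fun n => ?_
    have hn : (0 : ℝ) ≤ (n : ℝ) + 1 := by positivity
    simp only [gammaKernel, expPolylogTerm, Function.comp]
    push_cast
    rw [max_eq_left hn]
    push_cast
    ring_nf
  · intro m hm
    refine gammaKernel_of_nonpos hw t (Int.cast_nonpos.mpr (not_lt.mp fun hpos => hm ?_))
    exact ⟨(m - 1).toNat, by simp only; omega⟩

theorem expPolylog_eq_Gamma_mul_tsum {w : ℂ} (hw : w.re < 0) {t : ℝ} (ht : 0 < t) :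
    expPolylog w t = Complex.Gamma (1 - w) * ∑' n : ℤ, lipschitzNode t n ^ (w - 1) := by
  have hw0 : w ≠ 0 := by rintro rfl; simp at hw
  have hsum : Summable fun n : ℤ => 𝓕 (gammaKernel w t) (n : ℝ) := by
    simp_rw [fourier_gammaKernel hw ht]
    exact (summable_lipschitzNode_cpow hw t).mul_left _
  have hpoisson := Real.tsum_eq_tsum_fourier_of_rpow_decay_of_summable
    (continuous_gammaKernel hw t) one_lt_two (isBigO_gammaKernel_rpow hw0 ht _) hsum 0
  simp only [zero_add, QuotientAddGroup.mk_zero, fourier_eval_zero, mul_one,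
    fourier_gammaKernel hw ht] at hpoisson
  rw [← (hasSum_gammaKernel_int hw0 ht).tsum_eq, hpoisson, tsum_mul_left]

end LipschitzFormula

section Remainder

/-- The error of order `M` in the expansion of `expPolylog w t` as `t → 0⁺`: the singular term
`Γ(1 - w) t ^ (w - 1)` and the Taylor polynomial `∑_{j < M} ζ(w - j) (-t) ^ j / j!` are removed. -/
noncomputable def expPolylogRemainder (M : ℕ) (w : ℂ) (t : ℝ) : ℂ :=
  expPolylog w t - Complex.Gamma (1 - w) * (t : ℂ) ^ (w - 1) -
    ∑ j ∈ Finset.range M, riemannZeta (w - j) * (-(t : ℂ)) ^ j / (j.factorial : ℂ)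

theorem ne_neg_natCast_of_re_pos {s : ℂ} (hs : 0 < s.re) (m : ℕ) : s ≠ -(m : ℂ) := by
  rintro rfl
  simp only [Complex.neg_re, Complex.natCast_re, Left.neg_pos_iff] at hs
  exact (Nat.cast_nonneg m).not_gt hs

theorem ne_one_of_re_lt_one {s : ℂ} (hs : s.re < 1) : s ≠ 1 := by
  rintro rfl
  simp at hs

theorem differentiableAt_Gamma_one_sub {w : ℂ} (hw : w.re < 1) :
    DifferentiableAt ℂ (fun w => Complex.Gamma (1 - w)) w :=
  (Complex.differentiableAt_Gamma _ (ne_neg_natCast_of_re_pos (by simpa using hw))).comp w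
    (by fun_prop : DifferentiableAt ℂ (fun w : ℂ => 1 - w) w)

theorem ofReal_mul_cpow {x : ℝ} (hx : 0 < x) {z : ℂ} (hz : z ≠ 0) (r : ℂ) :
    ((x : ℂ) * z) ^ r = (x : ℂ) ^ r * z ^ r := by
  have hx' : (x : ℂ) ≠ 0 := Complex.ofReal_ne_zero.mpr hx.ne'
  rw [Complex.cpow_def_of_ne_zero (mul_ne_zero hx' hz), Complex.log_ofReal_mul hx hz,
    Complex.ofReal_log hx.le, add_mul, Complex.exp_add, ← Complex.cpow_def_of_ne_zero hx',
    ← Complex.cpow_def_of_ne_zero hz]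

theorem I_cpow_add_neg_I_cpow (r : ℂ) :
    Complex.I ^ r + (-Complex.I) ^ r = 2 * Complex.cos (Real.pi * r / 2) := by
  rw [Complex.cpow_def_of_ne_zero Complex.I_ne_zero, Complex.log_I,
    Complex.cpow_def_of_ne_zero (neg_ne_zero.mpr Complex.I_ne_zero), Complex.log_neg_I,
    Complex.cos]
  ring_nf

theorem lipschitzNode_zero_cpow_add (r : ℂ) (n : ℕ) :
    lipschitzNode 0 (n + 1) ^ r + lipschitzNode 0 (-(n + 1)) ^ r =
      2 * (2 * Real.pi) ^ r * Complex.cos (Real.pi * r / 2) * ((n : ℂ) + 1) ^ r := by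
  have hpos : (0 : ℝ) < 2 * Real.pi * (n + 1) := by positivity
  have hplus : lipschitzNode 0 (n + 1) = ((2 * Real.pi * (n + 1) : ℝ) : ℂ) * Complex.I := by
    simp [lipschitzNode]
  have hminus : lipschitzNode 0 (-(n + 1)) = ((2 * Real.pi * (n + 1) : ℝ) : ℂ) * -Complex.I := by
    simp only [lipschitzNode]
    push_cast
    ring
  rw [hplus, hminus, ofReal_mul_cpow hpos Complex.I_ne_zero,
    ofReal_mul_cpow hpos (neg_ne_zero.mpr Complex.I_ne_zero), ← mul_add, I_cpow_add_neg_I_cpow,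
    Complex.ofReal_mul, Complex.mul_cpow_ofReal_nonneg Real.two_pi_pos.le (by positivity)]
  push_cast
  ring

theorem Gamma_mul_tsum_lipschitzNode_zero {w : ℂ} (hw : w.re < 0) :
    Complex.Gamma (1 - w) * ∑' n : ℕ, (lipschitzNode 0 (n + 1) ^ (w - 1) +
      lipschitzNode 0 (-(n + 1)) ^ (w - 1)) = riemannZeta w := by
  have hre : 1 < (1 - w).re := by rw [Complex.sub_re, Complex.one_re]; linarith
  have hfe := riemannZeta_one_sub (ne_neg_natCast_of_re_pos (by linarith))
    (by rintro h; rw [h] at hre; simp at hre)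
  rw [sub_sub_cancel, zeta_eq_tsum_one_div_nat_add_one_cpow hre] at hfe
  simp_rw [lipschitzNode_zero_cpow_add, tsum_mul_left]
  have hpow (n : ℕ) : 1 / ((n : ℂ) + 1) ^ (1 - w) = ((n : ℂ) + 1) ^ (w - 1) := by
    rw [one_div, ← Complex.cpow_neg, neg_sub]
  rw [hfe, tsum_congr hpow, neg_sub, show (Real.pi : ℂ) * (w - 1) / 2 = -(Real.pi * (1 - w) / 2) by
    ring, Complex.cos_neg]
  ring

theorem expPolylogRemainder_zero_eq_tsum {w : ℂ} (hw : w.re < 0) {t : ℝ} (ht : 0 < t) :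
    expPolylogRemainder 0 w t = Complex.Gamma (1 - w) * ∑' n : ℕ,
      (lipschitzNode t (n + 1) ^ (w - 1) + lipschitzNode t (-(n + 1)) ^ (w - 1)) := by
  have hsum := summable_lipschitzNode_cpow hw t
  have hnat : Summable fun n : ℕ => lipschitzNode t n ^ (w - 1) :=
    hsum.comp_injective Nat.cast_injective
  have hneg : Summable fun n : ℕ => lipschitzNode t (-((n : ℤ) + 1)) ^ (w - 1) :=
    hsum.comp_injective (i := fun n : ℕ => -((n : ℤ) + 1)) fun a b h => by simpa using h
  have hsucc : Summable fun n : ℕ => lipschitzNode t ((n : ℤ) + 1) ^ (w - 1) :=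
    hsum.comp_injective (i := fun n : ℕ => (n : ℤ) + 1) fun a b h => by simpa using h
  have hzero : lipschitzNode t ((0 : ℕ) : ℤ) = t := by simp [lipschitzNode]
  rw [expPolylogRemainder, expPolylog_eq_Gamma_mul_tsum hw ht,
    tsum_of_nat_of_neg_add_one (f := fun n : ℤ => lipschitzNode t n ^ (w - 1)) hnat hneg,
    hnat.tsum_eq_zero_add, hsucc.tsum_add hneg, hzero, Finset.sum_range_zero]
  push_cast
  ring

theorem norm_lipschitzNode_cpow_add_le {w : ℂ} (hw : w.re ≤ 1) (t : ℝ) (n : ℕ) :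
    ‖lipschitzNode t (n + 1) ^ (w - 1) + lipschitzNode t (-(n + 1)) ^ (w - 1)‖ ≤
      2 * Real.exp (Real.pi * |w.im|) * ((n : ℝ) + 1) ^ (w.re - 1) := by
  have hplus := norm_lipschitzNode_cpow_le hw t (n := (n : ℤ) + 1) (by lia)
  have hminus := norm_lipschitzNode_cpow_le hw t (n := -((n : ℤ) + 1)) (by lia)
  have habs : |(n : ℝ) + 1| = n + 1 := abs_of_pos (by positivity)
  push_cast at hplus hminus
  rw [habs] at hplus
  rw [abs_neg, habs] at hminus
  exact (norm_add_le _ _).trans (by linarith)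

theorem summable_natCast_add_one_rpow {x : ℝ} (hx : x < -1) :
    Summable fun n : ℕ => ((n : ℝ) + 1) ^ x := by
  simpa using (summable_nat_add_iff 1).mpr (Real.summable_nat_rpow.mpr hx)

theorem exists_norm_expPolylogRemainder_zero_le {w₀ : ℂ} (hw₀ : w₀.re < 0) :
    ∃ C : ℝ, ∀ᶠ w in 𝓝 w₀, ∀ t : ℝ, 0 < t → ‖expPolylogRemainder 0 w t‖ ≤ C := by
  have hGamma : ∀ᶠ w in 𝓝 w₀, ‖Complex.Gamma (1 - w)‖ < ‖Complex.Gamma (1 - w₀)‖ + 1 :=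
    (differentiableAt_Gamma_one_sub (by linarith)).continuousAt.norm.eventually_lt
      continuousAt_const (by linarith)
  have him : ∀ᶠ w : ℂ in 𝓝 w₀, |w.im| < |w₀.im| + 1 :=
    Complex.continuous_im.abs.continuousAt.eventually_lt continuousAt_const (by linarith)
  have hre : ∀ᶠ w : ℂ in 𝓝 w₀, w.re < w₀.re / 2 :=
    Complex.continuous_re.continuousAt.eventually_lt continuousAt_const (by linarith)
  refine ⟨(‖Complex.Gamma (1 - w₀)‖ + 1) * ∑' n : ℕ, 2 * Real.exp (Real.pi * (|w₀.im| + 1)) *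
    ((n : ℝ) + 1) ^ (w₀.re / 2 - 1), ?_⟩
  filter_upwards [hGamma, him, hre] with w hwGamma hwim hwre t ht
  rw [expPolylogRemainder_zero_eq_tsum (by linarith) ht, norm_mul]
  gcongr
  refine tsum_of_norm_bounded
    ((summable_natCast_add_one_rpow (by linarith)).mul_left _).hasSum fun n => ?_
  refine (norm_lipschitzNode_cpow_add_le (by linarith) t n).trans ?_
  gcongr
  simp

theorem tendsto_expPolylogRemainder_zero {w : ℂ} (hw : w.re < 0) :
    Tendsto (expPolylogRemainder 0 w) (𝓝[>] 0) (𝓝 (riemannZeta w)) := by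
  have hnode {m : ℤ} (hm : m ≠ 0) :
      ContinuousAt (fun t : ℝ => lipschitzNode t m ^ (w - 1)) 0 := by
    have hcont : Continuous fun t : ℝ => lipschitzNode t m := by unfold lipschitzNode; fun_prop
    refine hcont.continuousAt.cpow continuousAt_const (Or.inr ?_)
    rw [lipschitzNode_im]
    exact mul_ne_zero Real.two_pi_pos.ne' (Int.cast_ne_zero.mpr hm)
  have hseries : Tendsto (fun t : ℝ => ∑' n : ℕ, (lipschitzNode t (n + 1) ^ (w - 1) +
      lipschitzNode t (-(n + 1)) ^ (w - 1))) (𝓝[>] 0) (𝓝 (∑' n : ℕ,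
        (lipschitzNode 0 (n + 1) ^ (w - 1) + lipschitzNode 0 (-(n + 1)) ^ (w - 1)))) :=
    tendsto_tsum_of_dominated_convergence
      ((summable_natCast_add_one_rpow (by linarith)).mul_left _)
      (fun n => ((hnode (by lia)).add (hnode (by lia))).tendsto.mono_left nhdsWithin_le_nhds)
      (Eventually.of_forall fun t n => norm_lipschitzNode_cpow_add_le (by linarith) t n)
  rw [← Gamma_mul_tsum_lipschitzNode_zero hw]
  refine (hseries.const_mul _).congr' ?_
  filter_upwards [self_mem_nhdsWithin] with t ht
  exact (expPolylogRemainder_zero_eq_tsum hw ht).symm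

theorem hasDerivAt_Gamma_mul_cpow {w : ℂ} (hw : w ≠ 1) {t : ℝ} (ht : t ≠ 0) :
    HasDerivAt (fun u : ℝ => Complex.Gamma (1 - w) * (u : ℂ) ^ (w - 1))
      (-(Complex.Gamma (1 - (w - 1)) * (t : ℂ) ^ (w - 1 - 1))) t := by
  refine ((hasDerivAt_ofReal_cpow_const ht (sub_ne_zero.mpr hw)).const_mul _).congr_deriv ?_
  rw [show 1 - (w - 1) = (1 - w) + 1 by ring, Complex.Gamma_add_one _ (sub_ne_zero.mpr hw.symm)]
  ring

theorem hasDerivAt_taylorTerm (a : ℂ) (j : ℕ) (t : ℝ) :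
    HasDerivAt (fun u : ℝ => a * (-(u : ℂ)) ^ (j + 1) / ((j + 1).factorial : ℂ))
      (-(a * (-(t : ℂ)) ^ j / (j.factorial : ℂ))) t := by
  have hneg : HasDerivAt (fun u : ℝ => -(u : ℂ)) (-1) t := (hasDerivAt_id t).ofReal_comp.neg
  refine (((hneg.pow (j + 1)).const_mul a).div_const ((j + 1).factorial : ℂ)).congr_deriv ?_
  have hfactorial : (j.factorial : ℂ) ≠ 0 := Nat.cast_ne_zero.mpr j.factorial_ne_zero
  have hsucc : (j : ℂ) + 1 ≠ 0 := Nat.cast_add_one_ne_zero j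
  rw [Nat.factorial_succ]
  push_cast
  field_simp

theorem hasDerivAt_expPolylogRemainder (M : ℕ) {w : ℂ} (hw : w ≠ 1) {t : ℝ} (ht : 0 < t) :
    HasDerivAt (expPolylogRemainder (M + 1) w) (-expPolylogRemainder M (w - 1) t) t := by
  have hpoly : HasDerivAt (fun u : ℝ => ∑ j ∈ Finset.range (M + 1),
      riemannZeta (w - j) * (-(u : ℂ)) ^ j / (j.factorial : ℂ))
      (-∑ j ∈ Finset.range M, riemannZeta (w - 1 - j) * (-(t : ℂ)) ^ j / (j.factorial : ℂ)) t := by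
    simp only [Finset.sum_range_succ', pow_zero, ← Finset.sum_neg_distrib]
    refine (HasDerivAt.fun_sum fun j _ => ?_).add_const _
    rw [show w - 1 - j = w - ((j + 1 : ℕ) : ℂ) by push_cast; ring]
    exact hasDerivAt_taylorTerm _ j t
  refine (((hasDerivAt_expPolylog w ht).sub
    (hasDerivAt_Gamma_mul_cpow hw ht.ne')).sub hpoly).congr_deriv ?_
  rw [expPolylogRemainder]
  ring

theorem tendsto_expPolylogRemainder_succ (M : ℕ) {w : ℂ} (hw : w.re < 0) :
    Tendsto (expPolylogRemainder (M + 1) w) (𝓝[>] 0) (𝓝 0) := by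
  have hpoly : Tendsto (fun t : ℝ => ∑ j ∈ Finset.range (M + 1),
      riemannZeta (w - j) * (-(t : ℂ)) ^ j / (j.factorial : ℂ)) (𝓝[>] 0) (𝓝 (riemannZeta w)) := by
    have hcont : Continuous fun t : ℝ => ∑ j ∈ Finset.range (M + 1),
      riemannZeta (w - j) * (-(t : ℂ)) ^ j / (j.factorial : ℂ) := by fun_prop
    refine Tendsto.mono_left ?_ nhdsWithin_le_nhds
    simpa [Finset.sum_range_succ'] using hcont.tendsto 0
  have hlim := (tendsto_expPolylogRemainder_zero hw).sub hpoly
  rw [sub_self] at hlim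
  exact hlim.congr fun t => by simp [expPolylogRemainder]

theorem norm_le_mul_pow_succ_of_norm_deriv_le {E : Type*} [NormedAddCommGroup E] [NormedSpace ℝ E]
    {f f' : ℝ → E} {C : ℝ} {M : ℕ} (hderiv : ∀ t, 0 < t → HasDerivAt f (f' t) t)
    (hlim : Tendsto f (𝓝[>] 0) (𝓝 0)) (hbound : ∀ t, 0 < t → ‖f' t‖ ≤ C * t ^ M)
    {t : ℝ} (ht : 0 < t) : ‖f t‖ ≤ C * t ^ (M + 1) := by
  have hC : 0 ≤ C := by simpa using (norm_nonneg _).trans (hbound 1 one_pos)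
  have hmean : ∀ ε ∈ Ioo 0 t, ‖f t - f ε‖ ≤ C * t ^ (M + 1) := by
    intro ε hε
    have hbound' : ∀ u ∈ Icc ε t, ‖f' u‖ ≤ C * t ^ M := fun u hu =>
      (hbound u (hε.1.trans_le hu.1)).trans (by gcongr; exacts [hε.1.le.trans hu.1, hu.2])
    refine ((convex_Icc ε t).norm_image_sub_le_of_norm_hasDerivWithin_le
      (fun u hu => (hderiv u (hε.1.trans_le hu.1)).hasDerivWithinAt) hbound'
      (left_mem_Icc.mpr hε.2.le) (right_mem_Icc.mpr hε.2.le)).trans ?_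
    rw [Real.norm_of_nonneg (sub_nonneg.mpr hε.2.le), pow_succ, ← mul_assoc]
    gcongr
    exact sub_le_self _ hε.1.le
  have hnorm := ((tendsto_const_nhds (x := f t)).sub hlim).norm
  rw [sub_zero] at hnorm
  exact le_of_tendsto hnorm (eventually_of_mem (Ioo_mem_nhdsGT ht) hmean)

theorem exists_norm_expPolylogRemainder_le (M : ℕ) {w₀ : ℂ} (hw₀ : w₀.re < 0) :
    ∃ C : ℝ, ∀ᶠ w in 𝓝 w₀, ∀ t : ℝ, 0 < t → ‖expPolylogRemainder M w t‖ ≤ C * t ^ M := by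
  induction M generalizing w₀ with
  | zero => simpa using exists_norm_expPolylogRemainder_zero_le hw₀
  | succ M ih =>
    obtain ⟨C, hC⟩ := ih (w₀ := w₀ - 1) (by rw [Complex.sub_re, Complex.one_re]; linarith)
    have hshift : Tendsto (fun w : ℂ => w - 1) (𝓝 w₀) (𝓝 (w₀ - 1)) :=
      (continuous_id.sub continuous_const).tendsto _
    have hre : ∀ᶠ w : ℂ in 𝓝 w₀, w.re < 0 :=
      Complex.continuous_re.continuousAt.eventually_lt continuousAt_const hw₀
    refine ⟨C, ?_⟩
    filter_upwards [hshift.eventually hC, hre] with w hbound hw t ht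
    exact norm_le_mul_pow_succ_of_norm_deriv_le
      (fun u hu => hasDerivAt_expPolylogRemainder M (ne_one_of_re_lt_one (by linarith)) hu)
      (tendsto_expPolylogRemainder_succ M hw) (fun u hu => by simpa using hbound u hu) ht

theorem continuousOn_expPolylogRemainder (M : ℕ) (w : ℂ) :
    ContinuousOn (expPolylogRemainder M w) (Ioi 0) := by
  refine ((continuousOn_expPolylog w).sub (ContinuousOn.mul continuousOn_const fun t ht => ?_)).sub
    (by fun_prop)
  exact (Complex.continuousAt_ofReal_cpow_const t _ (Or.inr (ne_of_gt ht))).continuousWithinAt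

theorem differentiableAt_expPolylogRemainder_left (M : ℕ) {w : ℂ} (hw : w.re < 1) {t : ℝ}
    (ht : 0 < t) : DifferentiableAt ℂ (fun w => expPolylogRemainder M w t) w := by
  have hzeta (j : ℕ) : DifferentiableAt ℂ (fun w : ℂ => riemannZeta (w - j)) w := by
    refine (differentiableAt_riemannZeta (ne_one_of_re_lt_one ?_)).comp w
      (by fun_prop : DifferentiableAt ℂ (fun w : ℂ => w - j) w)
    rw [Complex.sub_re, Complex.natCast_re]
    linarith [(Nat.cast_nonneg j : (0 : ℝ) ≤ j)]
  refine ((differentiable_expPolylog_left ht w).sub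
    ((differentiableAt_Gamma_one_sub hw).mul ?_)).sub
    (DifferentiableAt.fun_sum fun j _ => ((hzeta j).mul_const _).div_const _)
  exact DifferentiableAt.const_cpow (by fun_prop) (Or.inl (Complex.ofReal_ne_zero.mpr ht.ne'))

end Remainder

section MordellTornheimSeries

/-- The summand of the series `zetaMT s₁ s₂ s₃` at `m = p.1 + 1`, `n = p.2 + 1`. -/
noncomputable def mordellTornheimTerm (s₁ s₂ s₃ : ℂ) (p : ℕ × ℕ) : ℂ :=
  ((p.1 + 1 : ℕ) : ℂ) ^ (-s₁) * ((p.2 + 1 : ℕ) : ℂ) ^ (-s₂) * ((p.1 + p.2 + 2 : ℕ) : ℂ) ^ (-s₃)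

variable {s₁ s₂ s₃ : ℂ} {α β : ℝ}

theorem norm_mordellTornheimTerm_le (hα : 0 ≤ α) (hβ : 0 ≤ β) (hαβ : α + β = s₃.re) (p : ℕ × ℕ) :
    ‖mordellTornheimTerm s₁ s₂ s₃ p‖ ≤
      ((p.1 : ℝ) + 1) ^ (-(s₁.re + α)) * ((p.2 : ℝ) + 1) ^ (-(s₂.re + β)) := by
  have hm : (0 : ℝ) < p.1 + 1 := by positivity
  have hn : (0 : ℝ) < p.2 + 1 := by positivity
  have hmn : ((p.1 : ℝ) + p.2 + 2) ^ (-s₃.re) ≤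
      ((p.1 : ℝ) + 1) ^ (-α) * ((p.2 : ℝ) + 1) ^ (-β) := by
    rw [← hαβ, neg_add, Real.rpow_add (by positivity)]
    gcongr ?_ * ?_
    · exact Real.rpow_le_rpow_of_nonpos hm (by linarith) (by linarith)
    · exact Real.rpow_le_rpow_of_nonpos hn (by linarith) (by linarith)
  rw [mordellTornheimTerm, norm_mul, norm_mul, Complex.norm_natCast_cpow_of_pos (by lia),
    Complex.norm_natCast_cpow_of_pos (by lia), Complex.norm_natCast_cpow_of_pos (by lia)]
  simp only [Complex.neg_re]
  push_cast
  calc ((p.1 : ℝ) + 1) ^ (-s₁.re) * ((p.2 : ℝ) + 1) ^ (-s₂.re) *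
        ((p.1 : ℝ) + p.2 + 2) ^ (-s₃.re)
      ≤ ((p.1 : ℝ) + 1) ^ (-s₁.re) * ((p.2 : ℝ) + 1) ^ (-s₂.re) *
        (((p.1 : ℝ) + 1) ^ (-α) * ((p.2 : ℝ) + 1) ^ (-β)) := by gcongr
    _ = _ := by rw [neg_add, neg_add, Real.rpow_add hm, Real.rpow_add hn]; ring

theorem summable_rpow_mul_rpow {x y : ℝ} (hx : 1 < x) (hy : 1 < y) :
    Summable fun p : ℕ × ℕ => ((p.1 : ℝ) + 1) ^ (-x) * ((p.2 : ℝ) + 1) ^ (-y) :=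
  (summable_natCast_add_one_rpow (neg_lt_neg hx)).mul_of_nonneg
    (summable_natCast_add_one_rpow (neg_lt_neg hy)) (fun _ => by positivity) fun _ => by positivity

theorem summable_mordellTornheimTerm (hα : 0 ≤ α) (hβ : 0 ≤ β) (hαβ : α + β = s₃.re)
    (h₁ : 1 < s₁.re + α) (h₂ : 1 < s₂.re + β) : Summable (mordellTornheimTerm s₁ s₂ s₃) :=
  .of_norm_bounded (summable_rpow_mul_rpow h₁ h₂) (norm_mordellTornheimTerm_le hα hβ hαβ)

theorem mordellTornheimTerm_swap (s₁ s₂ s₃ : ℂ) (p : ℕ × ℕ) :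
    mordellTornheimTerm s₁ s₂ s₃ p.swap = mordellTornheimTerm s₂ s₁ s₃ p := by
  rw [mordellTornheimTerm, mordellTornheimTerm, Prod.fst_swap, Prod.snd_swap, add_comm p.2 p.1,
    mul_comm (((p.2 + 1 : ℕ) : ℂ) ^ (-s₁))]

theorem summable_mordellTornheimTerm_comm :
    Summable (mordellTornheimTerm s₁ s₂ s₃) ↔ Summable (mordellTornheimTerm s₂ s₁ s₃) := by
  rw [← (Equiv.prodComm ℕ ℕ).summable_iff]
  exact summable_congr (mordellTornheimTerm_swap s₁ s₂ s₃)

theorem zetaMT_comm (s₁ s₂ s₃ : ℂ) : zetaMT s₁ s₂ s₃ = zetaMT s₂ s₁ s₃ := by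
  refine ((Equiv.prodComm ℕ ℕ).tsum_eq (mordellTornheimTerm s₁ s₂ s₃)).symm.trans ?_
  exact tsum_congr (mordellTornheimTerm_swap s₁ s₂ s₃)

theorem natCast_cpow_neg_sub_one {n : ℕ} (hn : n ≠ 0) (s : ℂ) :
    (n : ℂ) ^ (-(s - 1)) = (n : ℂ) ^ (-s) * n := by
  rw [neg_sub, sub_eq_neg_add, Complex.cpow_add _ _ (Nat.cast_ne_zero.mpr hn), Complex.cpow_one]

theorem mordellTornheimTerm_sub_one_add_sub_one (s₁ s₂ s₃ : ℂ) (p : ℕ × ℕ) :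
    mordellTornheimTerm (s₁ - 1) s₂ s₃ p + mordellTornheimTerm s₁ (s₂ - 1) s₃ p =
      mordellTornheimTerm s₁ s₂ (s₃ - 1) p := by
  rw [mordellTornheimTerm, mordellTornheimTerm, mordellTornheimTerm,
    natCast_cpow_neg_sub_one p.1.succ_ne_zero, natCast_cpow_neg_sub_one p.2.succ_ne_zero,
    natCast_cpow_neg_sub_one (by lia : p.1 + p.2 + 2 ≠ 0)]
  push_cast
  ring

theorem zetaMT_sub_one_add_sub_one (h₁ : Summable (mordellTornheimTerm (s₁ - 1) s₂ s₃))
    (h₂ : Summable (mordellTornheimTerm s₁ (s₂ - 1) s₃)) :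
    zetaMT (s₁ - 1) s₂ s₃ + zetaMT s₁ (s₂ - 1) s₃ = zetaMT s₁ s₂ (s₃ - 1) :=
  (h₁.tsum_add h₂).symm.trans (tsum_congr (mordellTornheimTerm_sub_one_add_sub_one s₁ s₂ s₃))

variable {s : ℂ} {k : ℕ}

theorem re_two_mul_add_natCast (s : ℂ) (k : ℕ) : (2 * s + k).re = 2 * s.re + k := by
  simp only [Complex.add_re, Complex.mul_re, Complex.re_ofNat, Complex.im_ofNat, zero_mul, sub_zero,
    Complex.natCast_re]

theorem re_sub_natCast (s : ℂ) (k : ℕ) : (s - k).re = s.re - k := by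
  rw [Complex.sub_re, Complex.natCast_re]

theorem summable_mordellTornheimTerm_line (k : ℕ) (hs : 1 / 2 < s.re) :
    Summable (mordellTornheimTerm s (s - k) (2 * s + k)) := by
  refine summable_mordellTornheimTerm (α := s.re) (β := s.re + k) ?_ ?_ ?_ ?_ ?_ <;>
    linarith [re_two_mul_add_natCast s k, re_sub_natCast s k, k.cast_nonneg (α := ℝ)]

theorem zetaMT_line_zero (hs : 1 / 2 < s.re) :
    zetaMT s s (2 * s) = 2 * zetaMT s (s - 1) (2 * s + 1) := by
  have hsum : Summable (mordellTornheimTerm s (s - 1) (2 * s + 1)) := by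
    simpa only [Nat.cast_one] using summable_mordellTornheimTerm_line 1 hs
  have h := zetaMT_sub_one_add_sub_one (summable_mordellTornheimTerm_comm.mp hsum) hsum
  rw [zetaMT_comm (s - 1), add_sub_cancel_right, ← two_mul] at h
  exact h.symm

theorem analyticAt_zetaMT_line (k : ℕ) (hs : 1 / 2 < s.re) :
    AnalyticAt ℂ (fun z => zetaMT z (z - k) (2 * z + k)) s := by
  obtain ⟨σ, hσ, hσs⟩ := exists_between hs
  have hopen : IsOpen {z : ℂ | σ < z.re} := isOpen_lt continuous_const Complex.continuous_re
  refine DifferentiableOn.analyticAt (s := {z : ℂ | σ < z.re}) ?_ (hopen.mem_nhds hσs)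
  have hσ' : 1 < 2 * σ := by linarith
  refine Complex.differentiableOn_tsum_of_summable_norm (summable_rpow_mul_rpow hσ' hσ')
    (fun p z _ => DifferentiableAt.differentiableWithinAt ?_) hopen fun p z (hz : σ < z.re) => ?_
  · have hbase (n : ℕ) : ((n + 1 : ℕ) : ℂ) ≠ 0 := Nat.cast_ne_zero.mpr n.succ_ne_zero
    refine (DifferentiableAt.mul ?_ ?_).mul ?_ <;>
      exact DifferentiableAt.const_cpow (by fun_prop) (Or.inl (hbase _))
  · refine (norm_mordellTornheimTerm_le (α := z.re) (β := z.re + k) ?_ ?_ ?_ p).trans ?_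
    · linarith
    · linarith [k.cast_nonneg (α := ℝ)]
    · rw [re_two_mul_add_natCast]; ring
    · have hre : (z - k).re + (z.re + k) = z.re + z.re := by rw [re_sub_natCast]; ring
      rw [hre, ← two_mul]
      gcongr <;> linarith [p.1.cast_nonneg (α := ℝ), p.2.cast_nonneg (α := ℝ)]

end MordellTornheimSeries

section Mellin

theorem integrableOn_rpow_mul_exp_neg_half {q : ℝ} (hq : -1 < q) :
    IntegrableOn (fun t : ℝ => t ^ q * Real.exp (-t / 2)) (Ioi 0) := by
  refine (integrableOn_rpow_mul_exp_neg_mul_rpow hq one_pos one_half_pos).congr_fun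
    (fun t _ => ?_) measurableSet_Ioi
  simp only [Real.rpow_one]
  ring_nf

theorem rpow_le_rpow_add_rpow {t q q₀ q₁ : ℝ} (ht : 0 < t) (h₀ : q₀ ≤ q) (h₁ : q ≤ q₁) :
    t ^ q ≤ t ^ q₀ + t ^ q₁ := by
  rcases le_total t 1 with h | h
  · exact (Real.rpow_le_rpow_of_exponent_ge ht h h₀).trans
      (le_add_of_nonneg_right (Real.rpow_nonneg ht.le _))
  · exact (Real.rpow_le_rpow_of_exponent_le h h₁).trans
      (le_add_of_nonneg_left (Real.rpow_nonneg ht.le _))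

theorem aestronglyMeasurable_cpow_smul {f : ℝ → ℂ} (hf : ContinuousOn f (Ioi 0)) (s : ℂ) :
    AEStronglyMeasurable (fun t : ℝ => (t : ℂ) ^ (s - 1) • f t) (volume.restrict (Ioi 0)) := by
  have hcpow : ContinuousOn (fun t : ℝ => (t : ℂ) ^ (s - 1)) (Ioi 0) := fun t ht =>
    (Complex.continuousAt_ofReal_cpow_const t _ (Or.inr (ne_of_gt ht))).continuousWithinAt
  exact (hcpow.smul hf).aestronglyMeasurable measurableSet_Ioi

theorem hasMellin_finsetSum {ι : Type*} {f : ι → ℝ → ℂ} {s : ℂ} (I : Finset ι)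
    (hf : ∀ i ∈ I, MellinConvergent (f i) s) :
    HasMellin (fun t => ∑ i ∈ I, f i t) s (∑ i ∈ I, mellin (f i) s) := by
  constructor
  · simpa only [MellinConvergent, Finset.smul_sum] using! integrable_finsetSum I hf
  · simpa only [mellin, Finset.smul_sum] using! integral_finsetSum I hf

theorem mellinConvergent_expPolylog {w a : ℂ} {p : ℕ} (hw : -w.re ≤ p) (ha : p + 1 < a.re) :
    MellinConvergent (expPolylog w) a := by
  obtain ⟨C, hC⟩ := exists_norm_expPolylog_le p
  refine ((integrableOn_rpow_mul_exp_neg_half (q := a.re - p - 2) (by linarith)).const_mul C).mono'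
    (aestronglyMeasurable_cpow_smul (continuousOn_expPolylog w) a) ?_
  filter_upwards [ae_restrict_mem measurableSet_Ioi] with t (ht : 0 < t)
  rw [norm_smul, Complex.norm_cpow_eq_rpow_re_of_pos ht]
  calc t ^ (a - 1).re * ‖expPolylog w t‖
      ≤ t ^ (a - 1).re * (C / t ^ (p + 1) * Real.exp (-t / 2)) := by gcongr; exact hC w hw t ht
    _ = C * (t ^ (a.re - p - 2) * Real.exp (-t / 2)) := by
      have hexponent : a.re - p - 2 = (a - 1).re - (p + 1 : ℕ) := by
        rw [Complex.sub_re, Complex.one_re]; push_cast; ring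
      rw [hexponent, Real.rpow_sub ht, Real.rpow_natCast]
      ring

theorem mellin_expPolylog {w a : ℂ} (ha : 0 < a.re) (hwa : 1 < (w + a).re) :
    mellin (expPolylog w) a = Complex.Gamma a * riemannZeta (w + a) := by
  have hterm (n : ℕ) : ((n + 1 : ℕ) : ℂ) ^ (-w) / (((n + 1 : ℕ) : ℝ) : ℂ) ^ a =
      1 / ((n : ℂ) + 1) ^ (w + a) := by
    rw [Complex.ofReal_natCast, ← Nat.cast_add_one,
      Complex.cpow_add _ _ (Nat.cast_ne_zero.mpr n.succ_ne_zero), Complex.cpow_neg, one_div,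
      mul_inv, div_eq_mul_inv]
  have hnorm (n : ℕ) : ‖((n + 1 : ℕ) : ℂ) ^ (-w)‖ / ((n + 1 : ℕ) : ℝ) ^ a.re =
      ((n : ℝ) + 1) ^ (-(w + a).re) := by
    rw [Complex.norm_natCast_cpow_of_pos n.succ_pos, ← Real.rpow_sub (by positivity),
      Nat.cast_add_one, Complex.neg_re, Complex.add_re, neg_add']
  have hsum := hasSum_mellin (p := fun n : ℕ => ((n + 1 : ℕ) : ℝ)) (fun _ => Or.inr (by positivity))
    ha (fun t ht => hasSum_expPolylog w ht)
    ((summable_natCast_add_one_rpow (neg_lt_neg hwa)).congr fun n => (hnorm n).symm)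
  rw [← hsum.tsum_eq, zeta_eq_tsum_one_div_nat_add_one_cpow hwa, ← tsum_mul_left]
  exact tsum_congr fun n => by rw [mul_div_assoc, hterm]

theorem expPolylogTerm_mul_expPolylogTerm (a b : ℂ) (p : ℕ × ℕ) (t : ℝ) :
    expPolylogTerm a p.1 t * expPolylogTerm b p.2 t =
      ((p.1 + 1 : ℕ) : ℂ) ^ (-a) * ((p.2 + 1 : ℕ) : ℂ) ^ (-b) *
        (Real.exp (-((p.1 + p.2 + 2 : ℕ) : ℝ) * t) : ℂ) := by
  have hexp : Real.exp (-((p.1 + p.2 + 2 : ℕ) : ℝ) * t) =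
      Real.exp (-((p.1 + 1 : ℕ) : ℝ) * t) * Real.exp (-((p.2 + 1 : ℕ) : ℝ) * t) := by
    rw [← Real.exp_add]
    push_cast
    ring_nf
  rw [expPolylogTerm, expPolylogTerm, hexp, Complex.ofReal_mul]
  ring

theorem mellin_expPolylog_mul_expPolylog {a b c : ℂ} (hc : 0 < c.re)
    (hsum : Summable (mordellTornheimTerm a b c)) :
    mellin (fun t => expPolylog a t * expPolylog b t) c = Complex.Gamma c * zetaMT a b c := by
  have hpos (p : ℕ × ℕ) : (0 : ℝ) < (p.1 + p.2 + 2 : ℕ) := by positivity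
  have hterm (p : ℕ × ℕ) : ((p.1 + 1 : ℕ) : ℂ) ^ (-a) * ((p.2 + 1 : ℕ) : ℂ) ^ (-b) /
      (((p.1 + p.2 + 2 : ℕ) : ℝ) : ℂ) ^ c = mordellTornheimTerm a b c p := by
    rw [mordellTornheimTerm, Complex.ofReal_natCast, Complex.cpow_neg _ c, div_eq_mul_inv]
  have hproduct (t : ℝ) (ht : 0 < t) : HasSum (fun p : ℕ × ℕ =>
      ((p.1 + 1 : ℕ) : ℂ) ^ (-a) * ((p.2 + 1 : ℕ) : ℂ) ^ (-b) *
        (Real.exp (-((p.1 + p.2 + 2 : ℕ) : ℝ) * t) : ℂ)) (expPolylog a t * expPolylog b t) := by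
    have hsummable : Summable fun p : ℕ × ℕ => expPolylogTerm a p.1 t * expPolylogTerm b p.2 t :=
      summable_mul_of_summable_norm (f := fun n => expPolylogTerm a n t)
        (g := fun n => expPolylogTerm b n t)
        (summable_norm_expPolylogTerm a ht) (summable_norm_expPolylogTerm b ht)
    simpa only [expPolylogTerm_mul_expPolylogTerm] using
      (hasSum_expPolylog a ht).mul (hasSum_expPolylog b ht) hsummable
  have hnorm (p : ℕ × ℕ) : ‖mordellTornheimTerm a b c p‖ =
      ‖((p.1 + 1 : ℕ) : ℂ) ^ (-a) * ((p.2 + 1 : ℕ) : ℂ) ^ (-b)‖ /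
        ((p.1 + p.2 + 2 : ℕ) : ℝ) ^ c.re := by
    rw [← hterm, norm_div, Complex.norm_cpow_eq_rpow_re_of_pos (hpos p)]
  have hmellin := hasSum_mellin (fun p => Or.inr (hpos p)) hc hproduct (hsum.norm.congr hnorm)
  rw [← hmellin.tsum_eq, zetaMT, ← tsum_mul_left]
  exact tsum_congr fun p => by rw [mul_div_assoc, hterm, mordellTornheimTerm]

theorem exists_integrableOn_norm_mellin_remainder_le {p M : ℕ} {a b c : ℂ} (ha : -a.re < p)
    (hb : b.re < 0) (hc : p + 1 < c.re + M) :
    ∃ g : ℝ → ℝ, IntegrableOn g (Ioi 0) ∧ ∀ᶠ x : ℂ × ℂ × ℂ in 𝓝 (a, b, c), ∀ t : ℝ, 0 < t →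
      ‖(t : ℂ) ^ (x.2.2 - 1) • (expPolylog x.1 t * expPolylogRemainder M x.2.1 t)‖ ≤ g t := by
  obtain ⟨C, hC⟩ := exists_norm_expPolylog_le p
  obtain ⟨D, hD⟩ := exists_norm_expPolylogRemainder_le M hb
  obtain ⟨q₀, hq₀, hq₀c⟩ := exists_between (show -1 < c.re + M - p - 2 by linarith)
  obtain ⟨q₁, hq₁c⟩ := exists_gt (c.re + M - p - 2)
  refine ⟨fun t => C * D * (t ^ q₀ * Real.exp (-t / 2) + t ^ q₁ * Real.exp (-t / 2)),
    ((integrableOn_rpow_mul_exp_neg_half hq₀).add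
      (integrableOn_rpow_mul_exp_neg_half (by linarith))).const_mul _, ?_⟩
  have hre : ContinuousAt (fun x : ℂ × ℂ × ℂ => x.2.2.re + M - p - 2) (a, b, c) := by fun_prop
  have ha' : ∀ᶠ x : ℂ × ℂ × ℂ in 𝓝 (a, b, c), -x.1.re < p :=
    ContinuousAt.eventually_lt (by fun_prop) continuousAt_const ha
  have hb' : Tendsto (fun x : ℂ × ℂ × ℂ => x.2.1) (𝓝 (a, b, c)) (𝓝 b) :=
    (continuous_fst.comp continuous_snd).tendsto _
  filter_upwards [ha', hb'.eventually hD, continuousAt_const.eventually_lt hre hq₀c,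
    hre.eventually_lt continuousAt_const hq₁c] with x hxa hxb hx₀ hx₁ t ht
  have hpow : t ^ (x.2.2 - 1).re * (t ^ M / t ^ (p + 1)) = t ^ (x.2.2.re + M - p - 2) := by
    rw [← Real.rpow_natCast, ← Real.rpow_natCast, ← Real.rpow_sub ht, ← Real.rpow_add ht,
      Complex.sub_re, Complex.one_re]
    push_cast
    ring_nf
  have hle : ‖(t : ℂ) ^ (x.2.2 - 1) • (expPolylog x.1 t * expPolylogRemainder M x.2.1 t)‖ ≤
      C * D * (t ^ (x.2.2.re + M - p - 2) * Real.exp (-t / 2)) := by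
    rw [norm_smul, norm_mul, Complex.norm_cpow_eq_rpow_re_of_pos ht, ← hpow]
    calc t ^ (x.2.2 - 1).re * (‖expPolylog x.1 t‖ * ‖expPolylogRemainder M x.2.1 t‖)
        ≤ t ^ (x.2.2 - 1).re * ((C / t ^ (p + 1) * Real.exp (-t / 2)) * (D * t ^ M)) := by
          have hE := hC x.1 hxa.le t ht
          gcongr
          · exact (norm_nonneg _).trans hE
          · exact hxb t ht
      _ = _ := by ring
  have hCD : 0 ≤ C * D :=
    nonneg_of_mul_nonneg_left ((norm_nonneg _).trans hle) (by positivity)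
  refine hle.trans ?_
  rw [← add_mul]
  gcongr
  exact rpow_le_rpow_add_rpow ht hx₀.le hx₁.le

theorem continuousOn_expPolylog_mul_expPolylogRemainder (M : ℕ) (a b : ℂ) :
    ContinuousOn (fun t => expPolylog a t * expPolylogRemainder M b t) (Ioi 0) :=
  (continuousOn_expPolylog a).mul (continuousOn_expPolylogRemainder M b)

theorem mellinConvergent_expPolylog_mul_expPolylogRemainder {p M : ℕ} {a b c : ℂ} (ha : -a.re < p)
    (hb : b.re < 0) (hc : p + 1 < c.re + M) :
    MellinConvergent (fun t => expPolylog a t * expPolylogRemainder M b t) c := by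
  obtain ⟨g, hg, hle⟩ := exists_integrableOn_norm_mellin_remainder_le ha hb hc
  refine hg.mono' (aestronglyMeasurable_cpow_smul
    (continuousOn_expPolylog_mul_expPolylogRemainder M a b) c) ?_
  filter_upwards [ae_restrict_mem measurableSet_Ioi] with t ht using hle.self_of_nhds t ht

theorem differentiableAt_mellin_expPolylog_mul_expPolylogRemainder {p M : ℕ} {a b c : ℂ → ℂ}
    (ha : Differentiable ℂ a) (hb : Differentiable ℂ b) (hc : Differentiable ℂ c) {z : ℂ}
    (haz : -(a z).re < p) (hbz : (b z).re < 0) (hcz : p + 1 < (c z).re + M) :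
    DifferentiableAt ℂ
      (fun z => mellin (fun t => expPolylog (a z) t * expPolylogRemainder M (b z) t) (c z)) z := by
  obtain ⟨g, hg, hle⟩ := exists_integrableOn_norm_mellin_remainder_le haz hbz hcz
  have hcurve : ContinuousAt (fun z => (a z, b z, c z)) z :=
    (ha.continuous.prodMk (hb.continuous.prodMk hc.continuous)).continuousAt
  have hre : ∀ᶠ z in 𝓝 z, (b z).re < 0 :=
    (Complex.continuous_re.comp hb.continuous).continuousAt.eventually_lt continuousAt_const hbz
  refine differentiableAt_integral_of_dominated_loc ((hcurve.eventually hle).and hre)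
    (fun z _ => aestronglyMeasurable_cpow_smul
      (continuousOn_expPolylog_mul_expPolylogRemainder M (a z) (b z)) (c z)) ?_ ?_ hg
  · filter_upwards [ae_restrict_mem measurableSet_Ioi] with t (ht : 0 < t) z hz
    have hcpow : DifferentiableAt ℂ (fun z => (t : ℂ) ^ (c z - 1)) z :=
      (hc z).sub_const 1 |>.const_cpow (Or.inl (Complex.ofReal_ne_zero.mpr ht.ne'))
    have hremainder : DifferentiableAt ℂ (fun z => expPolylogRemainder M (b z) t) z :=
      (differentiableAt_expPolylogRemainder_left M (hz.2.trans one_pos) ht).comp z (hb z)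
    exact (hcpow.smul (((differentiable_expPolylog_left ht).comp ha z).mul hremainder))
      |>.differentiableWithinAt
  · filter_upwards [ae_restrict_mem measurableSet_Ioi] with t ht z hz using hz.1 t ht

theorem expPolylog_mul_expPolylog_eq_add (M : ℕ) (a b : ℂ) (t : ℝ) :
    expPolylog a t * expPolylog b t =
      Complex.Gamma (1 - b) • ((t : ℂ) ^ (b - 1) • expPolylog a t) +
      ∑ j ∈ Finset.range M, (riemannZeta (b - j) * ((-1) ^ j / (j.factorial : ℂ))) •
        ((t : ℂ) ^ (j : ℂ) • expPolylog a t) +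
      expPolylog a t * expPolylogRemainder M b t := by
  have hsum : ∑ j ∈ Finset.range M, (riemannZeta (b - j) * ((-1) ^ j / (j.factorial : ℂ))) •
      ((t : ℂ) ^ (j : ℂ) • expPolylog a t) = expPolylog a t *
        ∑ j ∈ Finset.range M, riemannZeta (b - j) * (-(t : ℂ)) ^ j / (j.factorial : ℂ) := by
    rw [Finset.mul_sum]
    refine Finset.sum_congr rfl fun j _ => ?_
    rw [smul_eq_mul, smul_eq_mul, Complex.cpow_natCast, neg_pow (t : ℂ)]
    ring
  rw [hsum, expPolylogRemainder, smul_eq_mul, smul_eq_mul]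
  ring

theorem mellin_expPolylog_mul_expPolylog_eq_add (M : ℕ) {p : ℕ} {a b c : ℂ} (ha : -a.re < p)
    (hb : b.re < 0) (hbc : p + 2 < (b + c).re) :
    mellin (fun t => expPolylog a t * expPolylog b t) c =
      Complex.Gamma (1 - b) * (Complex.Gamma (b + c - 1) * riemannZeta (a + b + c - 1)) +
      ∑ j ∈ Finset.range M, riemannZeta (b - j) * ((-1) ^ j / (j.factorial : ℂ)) *
        (Complex.Gamma (c + j) * riemannZeta (a + (c + j))) +
      mellin (fun t => expPolylog a t * expPolylogRemainder M b t) c := by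
  have hp : (0 : ℝ) ≤ p := p.cast_nonneg
  have hM : (0 : ℝ) ≤ M := M.cast_nonneg
  rw [Complex.add_re] at hbc
  have hre : (c + (b - 1)).re = c.re + b.re - 1 := by
    rw [Complex.add_re, Complex.sub_re, Complex.one_re]; ring
  have hre' (j : ℕ) : c.re ≤ (c + j).re := by
    rw [Complex.add_re, Complex.natCast_re]; linarith [j.cast_nonneg (α := ℝ)]
  have hsingular : MellinConvergent (fun t : ℝ => (t : ℂ) ^ (b - 1) • expPolylog a t) c :=
    MellinConvergent.cpow_smul.mpr (mellinConvergent_expPolylog ha.le (by linarith))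
  have htaylor (j : ℕ) : MellinConvergent (fun t : ℝ => (t : ℂ) ^ (j : ℂ) • expPolylog a t) c :=
    MellinConvergent.cpow_smul.mpr (mellinConvergent_expPolylog ha.le (by linarith [hre' j]))
  have hfinite := hasMellin_finsetSum (Finset.range M) fun j _ =>
    (htaylor j).const_smul (riemannZeta (b - j) * ((-1) ^ j / (j.factorial : ℂ)))
  have hsum := hasMellin_add (hsingular.const_smul (Complex.Gamma (1 - b))) hfinite.1
  have hremainder := mellinConvergent_expPolylog_mul_expPolylogRemainder (M := M) (c := c) ha hb
    (by linarith)
  rw [funext (expPolylog_mul_expPolylog_eq_add M a b), (hasMellin_add hsum.1 hremainder).2, hsum.2,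
    hfinite.2]
  simp only [mellin_const_smul, mellin_cpow_smul]
  simp only [smul_eq_mul]
  rw [mellin_expPolylog (by linarith) (by rw [Complex.add_re]; linarith)]
  congr 2
  · ring_nf
  · refine Finset.sum_congr rfl fun j _ => ?_
    rw [mellin_expPolylog (by linarith [hre' j]) (by rw [Complex.add_re]; linarith [hre' j])]

theorem Gamma_mul_zetaMT_eq_add (M : ℕ) {p : ℕ} {a b c : ℂ} (ha : -a.re < p) (hb : b.re < 0)
    (hbc : p + 2 < (b + c).re) :
    Complex.Gamma c * zetaMT a b c =
      Complex.Gamma (1 - b) * (Complex.Gamma (b + c - 1) * riemannZeta (a + b + c - 1)) +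
      ∑ j ∈ Finset.range M, riemannZeta (b - j) * ((-1) ^ j / (j.factorial : ℂ)) *
        (Complex.Gamma (c + j) * riemannZeta (a + (c + j))) +
      mellin (fun t => expPolylog a t * expPolylogRemainder M b t) c := by
  have hre := Complex.add_re b c
  have hc : 0 < c.re := by linarith [p.cast_nonneg (α := ℝ)]
  rw [← mellin_expPolylog_mul_expPolylog hc,
    mellin_expPolylog_mul_expPolylog_eq_add M ha hb hbc]
  refine summable_mordellTornheimTerm (α := p + 1) (β := c.re - p - 1) ?_ ?_ ?_ ?_ ?_ <;> linarith

end Mellin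

section Expansion

/-- The contribution of the singular term `Γ(1 - w) t ^ (w - 1)` of `expPolylog w t`, `w = s - k`,
to the expansion of `zetaMT s (s - k) (2 * s + k)`. -/
noncomputable def mordellTornheimSingularTerm (k : ℕ) (s : ℂ) : ℂ :=
  Complex.Gamma (3 * s - 1) *
    (Complex.Gamma (1 - (s - k)) * (Complex.Gamma (2 * s + k))⁻¹ * riemannZeta (4 * s - 1))

/-- The contribution of the `j`-th Taylor term of `expPolylog (s - k) t` to the expansion of
`zetaMT s (s - k) (2 * s + k)`. The product is `Γ(2 * s + k + j) / Γ(2 * s + k)`. -/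
noncomputable def mordellTornheimTaylorTerm (k j : ℕ) (s : ℂ) : ℂ :=
  riemannZeta (3 * s + k + j) * ((∏ i ∈ Finset.range j, (2 * s + k + i)) *
    ((-1) ^ j / (j.factorial : ℂ)) * riemannZeta (s - k - j))

/-- The contribution of the Taylor remainder of order `M` of `expPolylog (s - k) t` to the expansion
of `zetaMT s (s - k) (2 * s + k)`. -/
noncomputable def mordellTornheimRemainder (k M : ℕ) (s : ℂ) : ℂ :=
  (Complex.Gamma (2 * s + k))⁻¹ *
    mellin (fun t => expPolylog s t * expPolylogRemainder M (s - k) t) (2 * s + k)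

/-- The expansion of order `M` of `zetaMT s (s - k) (2 * s + k)`: for `M` large it continues this
function to the left, with poles coming from the explicit terms only. -/
noncomputable def mordellTornheimExpansion (k M : ℕ) (s : ℂ) : ℂ :=
  mordellTornheimSingularTerm k s + ∑ j ∈ Finset.range M, mordellTornheimTaylorTerm k j s +
    mordellTornheimRemainder k M s

theorem Gamma_add_natCast_eq_prod_mul {c : ℂ} {j : ℕ} (hc : ∀ i < j, c + i ≠ 0) :
    Complex.Gamma (c + j) = (∏ i ∈ Finset.range j, (c + i)) * Complex.Gamma c := by
  induction j with
  | zero => simp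
  | succ j ih =>
    rw [Finset.prod_range_succ, Nat.cast_succ, ← add_assoc,
      Complex.Gamma_add_one _ (hc j j.lt_add_one), ih fun i hi => hc i (hi.trans j.lt_add_one)]
    ring

theorem zetaMT_line_eq_expansion {k : ℕ} (M : ℕ) {s : ℂ} (hs : 2 / 3 < s.re) (hsk : s.re < k) :
    zetaMT s (s - k) (2 * s + k) = mordellTornheimExpansion k M s := by
  have hc : 0 < (2 * s + k).re := by
    rw [re_two_mul_add_natCast]
    positivity
  have hb : (s - k).re < 0 := by rw [re_sub_natCast]; linarith
  have hbc : (0 : ℕ) + 2 < (s - k + (2 * s + k)).re := by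
    rw [Complex.add_re, re_two_mul_add_natCast, re_sub_natCast]
    push_cast
    linarith
  have hGamma := Complex.Gamma_ne_zero_of_re_pos hc
  rw [← mul_right_inj' hGamma, Gamma_mul_zetaMT_eq_add M (p := 0) (by push_cast; linarith) hb hbc,
    mordellTornheimExpansion, mordellTornheimSingularTerm, mordellTornheimRemainder, mul_add,
    mul_add, mul_inv_cancel_left₀ hGamma, Finset.mul_sum]
  congr 2
  · rw [show s - k + (2 * s + k) - 1 = 3 * s - 1 by ring,
      show s + (s - k) + (2 * s + k) - 1 = 4 * s - 1 by ring]
    linear_combination -(Complex.Gamma (1 - (s - k)) * Complex.Gamma (3 * s - 1) *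
      riemannZeta (4 * s - 1)) * mul_inv_cancel₀ hGamma
  · refine Finset.sum_congr rfl fun j _ => ?_
    rw [Gamma_add_natCast_eq_prod_mul fun i _ h =>
      ne_neg_natCast_of_re_pos hc i (eq_neg_of_add_eq_zero_left h), mordellTornheimTaylorTerm,
      show s + (2 * s + k + j) = 3 * s + k + j by ring]
    ring

theorem analyticAt_mordellTornheimRemainder {k M p : ℕ} {s : ℂ} (hs : -(p : ℝ) < s.re)
    (hsk : s.re < k) (hM : 3 * p + 1 ≤ k + M) : AnalyticAt ℂ (mordellTornheimRemainder k M) s := by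
  have hM' : (3 * p + 1 : ℝ) ≤ k + M := by exact_mod_cast hM
  have hopen : IsOpen {z : ℂ | -(p : ℝ) < z.re ∧ z.re < k} :=
    (isOpen_lt continuous_const Complex.continuous_re).inter
      (isOpen_lt Complex.continuous_re continuous_const)
  refine DifferentiableOn.analyticAt (fun z hz => ?_) (hopen.mem_nhds ⟨hs, hsk⟩)
  have hmellin := differentiableAt_mellin_expPolylog_mul_expPolylogRemainder (M := M) (p := p)
    (a := fun z => z) (b := fun z => z - k) (c := fun z => 2 * z + k) (z := z)
    (by fun_prop) (by fun_prop) (by fun_prop) (neg_lt.mp hz.1)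
    (by rw [re_sub_natCast]; linarith [hz.2])
    (by rw [re_two_mul_add_natCast]; linarith [hz.1])
  have hGamma : DifferentiableAt ℂ (fun z : ℂ => (Complex.Gamma (2 * z + k))⁻¹) z :=
    (Complex.differentiable_one_div_Gamma.comp (by fun_prop : Differentiable ℂ
      fun z : ℂ => 2 * z + k)) z
  exact (hGamma.mul hmellin).differentiableWithinAt

end Expansion

section MeromorphicOrder

variable {𝕜 E : Type*} [NontriviallyNormedField 𝕜] [NormedAddCommGroup E] [NormedSpace 𝕜 E]
  {x : 𝕜}

theorem le_meromorphicOrderAt_fun_add {f g : 𝕜 → E} {n : WithTop ℤ} (hf : MeromorphicAt f x)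
    (hg : MeromorphicAt g x) (hnf : n ≤ meromorphicOrderAt f x)
    (hng : n ≤ meromorphicOrderAt g x) : n ≤ meromorphicOrderAt (fun z => f z + g z) x :=
  (le_min hnf hng).trans (meromorphicOrderAt_add hf hg)

theorem le_meromorphicOrderAt_fun_sum {ι : Type*} {F : ι → 𝕜 → E} {n : WithTop ℤ} (I : Finset ι)
    (hF : ∀ i ∈ I, MeromorphicAt (F i) x) (hn : ∀ i ∈ I, n ≤ meromorphicOrderAt (F i) x) :
    n ≤ meromorphicOrderAt (fun z => ∑ i ∈ I, F i z) x := by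
  classical
  induction I using Finset.induction_on with
  | empty =>
    have htop : meromorphicOrderAt (fun _ : 𝕜 => (0 : E)) x = ⊤ :=
      meromorphicOrderAt_eq_top_iff.mpr (Eventually.of_forall fun _ => rfl)
    simp only [Finset.sum_empty, htop, le_top]
  | insert i I hi ih =>
    simp only [Finset.sum_insert hi]
    rw [Finset.forall_mem_insert] at hF hn
    exact le_meromorphicOrderAt_fun_add hF.1 (MeromorphicAt.fun_sum hF.2) hn.1 (ih hF.2 hn.2)

theorem neg_one_le_meromorphicOrderAt_of_analyticAt {f : 𝕜 → E} (hf : AnalyticAt 𝕜 f x) :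
    -1 ≤ meromorphicOrderAt f x :=
  le_trans (by decide) hf.meromorphicOrderAt_nonneg

theorem one_le_meromorphicOrderAt_of_eq_zero {f : 𝕜 → E} (hf : AnalyticAt 𝕜 f x) (hfx : f x = 0) :
    1 ≤ meromorphicOrderAt f x := by
  have hlim : Tendsto f (𝓝[≠] x) (𝓝 0) := hfx ▸ hf.continuousAt.continuousWithinAt
  have hpos := (tendsto_zero_iff_meromorphicOrderAt_pos hf.meromorphicAt).mp hlim
  cases hn : meromorphicOrderAt f x with
  | top => exact le_top
  | coe n => exact_mod_cast Int.add_one_le_of_lt (WithTop.coe_lt_coe.mp (hn ▸ hpos))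

theorem eventuallyEq_nhdsNE_of_meromorphicOn {f g : 𝕜 → E} {U : Set 𝕜} (hU : IsPreconnected U)
    (hf : MeromorphicOn f U) (hg : MeromorphicOn g U) {x y : 𝕜} (hx : x ∈ U) (hy : y ∈ U)
    (h : f =ᶠ[𝓝[≠] x] g) : f =ᶠ[𝓝[≠] y] g := by
  have eventuallyEq_iff (z : 𝕜) : f =ᶠ[𝓝[≠] z] g ↔ meromorphicOrderAt (f - g) z = ⊤ := by
    simp only [meromorphicOrderAt_eq_top_iff, Pi.sub_apply, sub_eq_zero, EventuallyEq]
  rw [eventuallyEq_iff] at h ⊢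
  by_contra hne
  exact (hf.sub hg).meromorphicOrderAt_ne_top_of_isPreconnected hU hy hx hne h

variable {f g : 𝕜 → 𝕜}

theorem meromorphicOrderAt_fun_mul_nonneg_of_eq_zero (hf : MeromorphicAt f x)
    (hnf : -1 ≤ meromorphicOrderAt f x) (hg : AnalyticAt 𝕜 g x) (hgx : g x = 0) :
    0 ≤ meromorphicOrderAt (fun z => f z * g z) x := by
  rw [fun_meromorphicOrderAt_mul hf hg.meromorphicAt]
  exact add_le_add hnf (one_le_meromorphicOrderAt_of_eq_zero hg hgx)

theorem le_meromorphicOrderAt_fun_mul {n : WithTop ℤ} (hf : MeromorphicAt f x)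
    (hnf : n ≤ meromorphicOrderAt f x) (hg : AnalyticAt 𝕜 g x) :
    n ≤ meromorphicOrderAt (fun z => f z * g z) x := by
  rw [fun_meromorphicOrderAt_mul hf hg.meromorphicAt]
  exact le_add_of_le_of_nonneg hnf hg.meromorphicOrderAt_nonneg

theorem meromorphicOrderAt_sub_mul (hf : MeromorphicAt f x) :
    meromorphicOrderAt (fun z => (z - x) * f z) x = 1 + meromorphicOrderAt f x := by
  rw [fun_meromorphicOrderAt_mul (by fun_prop) hf, meromorphicOrderAt_id_sub_const]

theorem neg_one_le_meromorphicOrderAt_of_tendsto (hf : MeromorphicAt f x) {c : 𝕜}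
    (h : Tendsto (fun z => (z - x) * f z) (𝓝[≠] x) (𝓝 c)) : -1 ≤ meromorphicOrderAt f x := by
  have hord := (tendsto_nhds_iff_meromorphicOrderAt_nonneg (by fun_prop)).mp ⟨c, h⟩
  rw [meromorphicOrderAt_sub_mul hf] at hord
  cases hn : meromorphicOrderAt f x with
  | top => exact le_top
  | coe n =>
    have hn0 : 0 ≤ 1 + n := by exact_mod_cast hn ▸ hord
    exact WithTop.coe_le_coe.mpr (by lia : -1 ≤ n)

theorem meromorphicOrderAt_nonneg_of_tendsto (hf : MeromorphicAt f x)
    (h : Tendsto (fun z => (z - x) * f z) (𝓝[≠] x) (𝓝 0)) : 0 ≤ meromorphicOrderAt f x := by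
  have hord := (tendsto_zero_iff_meromorphicOrderAt_pos (by fun_prop)).mp h
  rw [meromorphicOrderAt_sub_mul hf] at hord
  cases hn : meromorphicOrderAt f x with
  | top => exact le_top
  | coe n =>
    have hn0 : 0 < 1 + n := by exact_mod_cast hn ▸ hord
    exact_mod_cast (by lia : 0 ≤ n)

end MeromorphicOrder

section GammaZetaPoles

theorem neg_one_le_meromorphicOrderAt_Gamma_neg_natCast (n : ℕ) :
    -1 ≤ meromorphicOrderAt Complex.Gamma (-n) := by
  induction n with
  | zero =>
    refine neg_one_le_meromorphicOrderAt_of_tendsto (Meromorphic.Gamma _) (c := 1) ?_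
    simpa only [Nat.cast_zero, neg_zero, sub_zero] using Complex.tendsto_self_mul_Gamma_nhds_zero
  | succ n ih =>
    have hne : (-(n + 1 : ℕ) : ℂ) ≠ 0 := neg_ne_zero.mpr (Nat.cast_ne_zero.mpr n.succ_ne_zero)
    have hshift : (fun z => Complex.Gamma (z + 1)) =ᶠ[𝓝[≠] (-(n + 1 : ℕ) : ℂ)]
        id * Complex.Gamma := by
      filter_upwards [(eventually_ne_nhds hne).filter_mono nhdsWithin_le_nhds] with z hz
      exact Complex.Gamma_add_one z hz
    rw [← meromorphicOrderAt_mul_of_ne_zero analyticAt_id hne, ← meromorphicOrderAt_congr hshift,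
      meromorphicOrderAt_fun_comp_add_const_eq_meromorphicOrderAt]
    rwa [Nat.cast_succ, neg_add_rev, neg_add_cancel_comm]

theorem neg_one_le_meromorphicOrderAt_Gamma (s : ℂ) :
    -1 ≤ meromorphicOrderAt Complex.Gamma s := by
  by_cases h : ∃ n : ℕ, s = -n
  · obtain ⟨n, rfl⟩ := h
    exact neg_one_le_meromorphicOrderAt_Gamma_neg_natCast n
  · push Not at h
    have hcont := (Complex.differentiableAt_Gamma s h).continuousAt
    exact neg_one_le_meromorphicOrderAt_of_analyticAt ((Meromorphic.Gamma s).analyticAt hcont)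

theorem meromorphic_riemannZeta : Meromorphic riemannZeta := by
  intro s
  rcases eq_or_ne s 1 with rfl | hs
  · have hcompleted := (differentiable_completedZeta₀.analyticAt 1).meromorphicAt
    have hGamma := (Complex.differentiable_Gammaℝ_inv.analyticAt 1).meromorphicAt
    have hzero : MeromorphicAt (fun z : ℂ => 1 / z) 1 := by fun_prop
    have hone : MeromorphicAt (fun z : ℂ => 1 / (1 - z)) 1 := by fun_prop
    refine (((hcompleted.sub hzero).sub hone).mul hGamma).congr ?_
    filter_upwards [eventually_ne_nhdsWithin one_ne_zero] with z hz
    exact (completedRiemannZeta_eq z ▸ riemannZeta_def_of_ne_zero hz).symm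
  · exact (analyticOn_riemannZeta s hs).meromorphicAt

theorem neg_one_le_meromorphicOrderAt_riemannZeta (s : ℂ) :
    -1 ≤ meromorphicOrderAt riemannZeta s := by
  rcases eq_or_ne s 1 with rfl | hs
  · exact neg_one_le_meromorphicOrderAt_of_tendsto (meromorphic_riemannZeta 1)
      riemannZeta_residue_one
  · exact neg_one_le_meromorphicOrderAt_of_analyticAt (analyticOn_riemannZeta s hs)

end GammaZetaPoles

section ExpansionPoles

variable {k : ℕ} {s : ℂ}

theorem meromorphic_mordellTornheimSingularTerm (k : ℕ) :
    Meromorphic (mordellTornheimSingularTerm k) := by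
  intro s
  have hGamma {g : ℂ → ℂ} (hg : AnalyticAt ℂ g s) :
      MeromorphicAt (fun z => Complex.Gamma (g z)) s :=
    (Meromorphic.Gamma (g s)).comp_analyticAt hg
  have hzeta : MeromorphicAt (fun z => riemannZeta (4 * z - 1)) s :=
    (meromorphic_riemannZeta _).comp_analyticAt (g := fun z : ℂ => 4 * z - 1) (by fun_prop)
  exact (hGamma (by fun_prop)).mul
    (((hGamma (by fun_prop)).mul (hGamma (by fun_prop)).inv).mul hzeta)

theorem meromorphic_mordellTornheimTaylorTerm (k j : ℕ) :
    Meromorphic (mordellTornheimTaylorTerm k j) := by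
  intro s
  have hzeta {g : ℂ → ℂ} (hg : AnalyticAt ℂ g s) : MeromorphicAt (fun z => riemannZeta (g z)) s :=
    (meromorphic_riemannZeta (g s)).comp_analyticAt hg
  have hprod : MeromorphicAt (fun z : ℂ => ∏ i ∈ Finset.range j, (2 * z + k + i)) s := by
    fun_prop
  exact (hzeta (by fun_prop)).mul ((hprod.mul (MeromorphicAt.const _ s)).mul (hzeta (by fun_prop)))

theorem analyticAt_mordellTornheimSingularTerm_cofactor (hs : s.re < 1 / 2) :
    AnalyticAt ℂ (fun z => Complex.Gamma (1 - (z - k)) * (Complex.Gamma (2 * z + k))⁻¹ *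
      riemannZeta (4 * z - 1)) s := by
  have hre : 0 < (1 - (s - k)).re := by
    simp only [Complex.sub_re, Complex.one_re, Complex.natCast_re]
    linarith [k.cast_nonneg (α := ℝ)]
  have hne : 4 * s - 1 ≠ 1 := ne_one_of_re_lt_one (by norm_num; linarith)
  have hGamma : AnalyticAt ℂ Complex.Gamma (1 - (s - k)) := (Meromorphic.Gamma _).analyticAt
    (Complex.differentiableAt_Gamma _ (ne_neg_natCast_of_re_pos hre)).continuousAt
  have hGammaInv : AnalyticAt ℂ (fun z => (Complex.Gamma z)⁻¹) (2 * s + k) :=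
    Complex.differentiable_one_div_Gamma.analyticAt _
  exact ((hGamma.fun_comp (f := fun z : ℂ => 1 - (z - k)) (by fun_prop)).mul
    (hGammaInv.fun_comp (f := fun z : ℂ => 2 * z + k) (by fun_prop))).mul
    ((analyticOn_riemannZeta _ hne).fun_comp (f := fun z => 4 * z - 1) (by fun_prop))

theorem analyticAt_mordellTornheimTaylorTerm_cofactor (j : ℕ) (hs : s.re < k + 1) :
    AnalyticAt ℂ (fun z : ℂ => (∏ i ∈ Finset.range j, (2 * z + k + i)) *
      ((-1) ^ j / (j.factorial : ℂ)) * riemannZeta (z - k - j)) s := by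
  have hne : s - k - j ≠ 1 := ne_one_of_re_lt_one (by
    simp only [Complex.sub_re, Complex.natCast_re]
    linarith [j.cast_nonneg (α := ℝ)])
  have hprod : AnalyticAt ℂ (fun z : ℂ => ∏ i ∈ Finset.range j, (2 * z + k + i)) s := by
    fun_prop
  exact (hprod.mul analyticAt_const).mul
    ((analyticOn_riemannZeta _ hne).fun_comp (f := fun z : ℂ => z - k - j) (by fun_prop))

theorem neg_one_le_meromorphicOrderAt_Gamma_three_mul_sub_one (s : ℂ) :
    -1 ≤ meromorphicOrderAt (fun z => Complex.Gamma (3 * z - 1)) s :=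
  (neg_one_le_meromorphicOrderAt_Gamma (3 * s - 1)).trans_eq
    (meromorphicOrderAt_comp_of_deriv_ne_zero (g := fun z => 3 * z - 1) (by fun_prop)
      (by simp)).symm

theorem neg_one_le_meromorphicOrderAt_riemannZeta_three_mul_add (k j : ℕ) (s : ℂ) :
    -1 ≤ meromorphicOrderAt (fun z => riemannZeta (3 * z + k + j)) s :=
  (neg_one_le_meromorphicOrderAt_riemannZeta (3 * s + k + j)).trans_eq
    (meromorphicOrderAt_comp_of_deriv_ne_zero (g := fun z : ℂ => 3 * z + k + j) (by fun_prop)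
      (by simp)).symm

theorem meromorphic_Gamma_three_mul_sub_one :
    Meromorphic (fun z => Complex.Gamma (3 * z - 1)) := fun s =>
  (Meromorphic.Gamma _).comp_analyticAt (g := fun z : ℂ => 3 * z - 1) (x := s) (by fun_prop)

theorem meromorphic_riemannZeta_three_mul_add (k j : ℕ) :
    Meromorphic (fun z => riemannZeta (3 * z + k + j)) := fun s =>
  (meromorphic_riemannZeta _).comp_analyticAt (g := fun z : ℂ => 3 * z + k + j) (x := s)
    (by fun_prop)

theorem neg_one_le_meromorphicOrderAt_mordellTornheimSingularTerm (hs : s.re < 1 / 2) :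
    -1 ≤ meromorphicOrderAt (mordellTornheimSingularTerm k) s :=
  le_meromorphicOrderAt_fun_mul (meromorphic_Gamma_three_mul_sub_one s)
    (neg_one_le_meromorphicOrderAt_Gamma_three_mul_sub_one s)
    (analyticAt_mordellTornheimSingularTerm_cofactor hs)

theorem neg_one_le_meromorphicOrderAt_mordellTornheimTaylorTerm (j : ℕ) (hs : s.re < k + 1) :
    -1 ≤ meromorphicOrderAt (mordellTornheimTaylorTerm k j) s :=
  le_meromorphicOrderAt_fun_mul (meromorphic_riemannZeta_three_mul_add k j s)
    (neg_one_le_meromorphicOrderAt_riemannZeta_three_mul_add k j s)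
    (analyticAt_mordellTornheimTaylorTerm_cofactor j hs)

theorem neg_natCast_re_nonpos (n : ℕ) : (-n : ℂ).re ≤ 0 := by
  simp

theorem two_mul_neg_natCast_add_natCast {ℓ : ℕ} (hkl : k ≤ 2 * ℓ) :
    2 * (-ℓ : ℂ) + k = -((2 * ℓ - k : ℕ) : ℂ) := by
  push_cast [Nat.cast_sub hkl]
  ring

theorem meromorphicOrderAt_mordellTornheimSingularTerm_nonneg {ℓ : ℕ} (hkl : k ≤ 2 * ℓ) :
    0 ≤ meromorphicOrderAt (mordellTornheimSingularTerm k) (-ℓ) := by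
  refine meromorphicOrderAt_fun_mul_nonneg_of_eq_zero (meromorphic_Gamma_three_mul_sub_one _)
    (neg_one_le_meromorphicOrderAt_Gamma_three_mul_sub_one _)
    (analyticAt_mordellTornheimSingularTerm_cofactor ?_) ?_
  · exact (neg_natCast_re_nonpos ℓ).trans_lt one_half_pos
  · rw [two_mul_neg_natCast_add_natCast hkl, Complex.Gamma_neg_nat_eq_zero, inv_zero, mul_zero,
      zero_mul]

theorem meromorphicOrderAt_mordellTornheimTaylorTerm_nonneg_of_ne {j : ℕ}
    (hs : s.re < k + 1) (hne : 3 * s + k + j ≠ 1) :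
    0 ≤ meromorphicOrderAt (mordellTornheimTaylorTerm k j) s := by
  have hzeta : AnalyticAt ℂ (fun z => riemannZeta (3 * z + k + j)) s :=
    (analyticOn_riemannZeta _ hne).fun_comp (f := fun z : ℂ => 3 * z + k + j) (by fun_prop)
  exact (hzeta.mul (analyticAt_mordellTornheimTaylorTerm_cofactor j hs)).meromorphicOrderAt_nonneg

theorem meromorphicOrderAt_mordellTornheimTaylorTerm_nonneg {ℓ : ℕ} (j : ℕ)
    (hkl : k ≤ 2 * ℓ) : 0 ≤ meromorphicOrderAt (mordellTornheimTaylorTerm k j) (-ℓ) := by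
  have hs : (-ℓ : ℂ).re < k + 1 := (neg_natCast_re_nonpos ℓ).trans_lt k.cast_add_one_pos
  by_cases hpole : 3 * (-ℓ : ℂ) + k + j = 1
  · have hmem : 2 * ℓ - k ∈ Finset.range j := by
      have hsum : k + j = 1 + 3 * ℓ := by
        exact_mod_cast (by linear_combination hpole : (k + j : ℂ) = 1 + 3 * ℓ)
      rw [Finset.mem_range]
      lia
    refine meromorphicOrderAt_fun_mul_nonneg_of_eq_zero
      (meromorphic_riemannZeta_three_mul_add k j _)
      (neg_one_le_meromorphicOrderAt_riemannZeta_three_mul_add k j _)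
      (analyticAt_mordellTornheimTaylorTerm_cofactor j hs) ?_
    rw [two_mul_neg_natCast_add_natCast hkl, Finset.prod_eq_zero hmem (neg_add_cancel _),
      zero_mul, zero_mul]
  · exact meromorphicOrderAt_mordellTornheimTaylorTerm_nonneg_of_ne hs hpole

theorem meromorphicOrderAt_Gamma_sub_one_add_riemannZeta_add_one_nonneg :
    0 ≤ meromorphicOrderAt (fun w => Complex.Gamma (w - 1) + riemannZeta (w + 1)) 0 := by
  have hGamma : Tendsto (fun w => w * Complex.Gamma (w - 1)) (𝓝[≠] (0 : ℂ)) (𝓝 (-1)) := by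
    have hinv : Tendsto (fun w : ℂ => (w - 1)⁻¹) (𝓝[≠] 0) (𝓝 (0 - 1)⁻¹) :=
      ((by fun_prop : ContinuousAt (fun w : ℂ => w - 1) 0).inv₀ (by norm_num)).tendsto.mono_left
        nhdsWithin_le_nhds
    have hmul := Complex.tendsto_self_mul_Gamma_nhds_zero.mul hinv
    rw [zero_sub, inv_neg_one, one_mul] at hmul
    refine hmul.congr' ?_
    filter_upwards [(eventually_ne_nhds zero_ne_one).filter_mono nhdsWithin_le_nhds] with w hw
    have hw1 : w - 1 ≠ 0 := sub_ne_zero.mpr hw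
    rw [← sub_add_cancel w 1, Complex.Gamma_add_one _ hw1, sub_add_cancel]
    field_simp
  have hzeta : Tendsto (fun w => w * riemannZeta (w + 1)) (𝓝[≠] (0 : ℂ)) (𝓝 1) := by
    have hshift : Tendsto (fun w : ℂ => w + 1) (𝓝[≠] 0) (𝓝[≠] 1) := by
      simpa only [Tendsto, zero_add] using (map_add_right_nhdsNE (c := (1 : ℂ)) (a := 0)).le
    simpa only [Function.comp_def, add_sub_cancel_right] using
      riemannZeta_residue_one.comp hshift
  refine meromorphicOrderAt_nonneg_of_tendsto ?_ ?_
  · exact ((Meromorphic.Gamma _).comp_analyticAt (g := fun w : ℂ => w - 1) (by fun_prop)).add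
      ((meromorphic_riemannZeta _).comp_analyticAt (g := fun w : ℂ => w + 1) (by fun_prop))
  · simpa only [sub_zero, mul_add, neg_add_cancel] using hGamma.add hzeta

-- At `s = 0` the simple poles of `Γ(3s - 1)` and `ζ(3s + 1)` have opposite residues, and both
-- cofactors take the value `ζ(-1)` there.
theorem meromorphicOrderAt_mordellTornheimSingularTerm_add_taylorTerm_nonneg :
    0 ≤ meromorphicOrderAt
      (fun s => mordellTornheimSingularTerm 1 s + mordellTornheimTaylorTerm 1 0 s) 0 := by
  have hre : (0 : ℂ).re < 1 / 2 := by norm_num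
  have hu := analyticAt_mordellTornheimSingularTerm_cofactor (k := 1) hre
  have hv := analyticAt_mordellTornheimTaylorTerm_cofactor (k := 1) (s := 0) 0 (by norm_num)
  have hGamma := meromorphic_Gamma_three_mul_sub_one 0
  have hsum : 0 ≤ meromorphicOrderAt
      (fun z => Complex.Gamma (3 * z - 1) + riemannZeta (3 * z + (1 : ℕ) + (0 : ℕ))) 0 := by
    have hcomp := meromorphicOrderAt_comp_of_deriv_ne_zero (x := (0 : ℂ)) (g := fun z => 3 * z)
      (f := fun w => Complex.Gamma (w - 1) + riemannZeta (w + 1)) (by fun_prop) (by simp)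
    simp only [Nat.cast_one, Nat.cast_zero, add_zero]
    rw [mul_zero] at hcomp
    exact meromorphicOrderAt_Gamma_sub_one_add_riemannZeta_add_one_nonneg.trans_eq hcomp.symm
  have hdiff := meromorphicOrderAt_fun_mul_nonneg_of_eq_zero hGamma
    (neg_one_le_meromorphicOrderAt_Gamma_three_mul_sub_one 0) (hu.sub hv)
    (by simp [one_add_one_eq_two])
  have hprod := le_meromorphicOrderAt_fun_mul
    (hGamma.add (meromorphic_riemannZeta_three_mul_add 1 0 0)) hsum hv
  refine (le_meromorphicOrderAt_fun_add (hGamma.mul (hu.sub hv).meromorphicAt)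
    ((hGamma.add (meromorphic_riemannZeta_three_mul_add 1 0 0)).mul hv.meromorphicAt)
    hdiff hprod).trans_eq (congrArg (meromorphicOrderAt · 0) (funext fun z => ?_))
  simp only [mordellTornheimSingularTerm, mordellTornheimTaylorTerm, Pi.sub_apply, Pi.add_apply,
    Pi.mul_apply]
  ring

theorem meromorphicOn_mordellTornheimExpansion {M p : ℕ} (hM : 3 * p + 1 ≤ k + M) :
    MeromorphicOn (mordellTornheimExpansion k M) {s | -(p : ℝ) < s.re ∧ s.re < k} := fun s hs =>
  ((meromorphic_mordellTornheimSingularTerm k s).add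
    (MeromorphicAt.fun_sum fun j _ => meromorphic_mordellTornheimTaylorTerm k j s)).add
    (analyticAt_mordellTornheimRemainder hs.1 hs.2 hM).meromorphicAt

theorem le_meromorphicOrderAt_mordellTornheimExpansion {M p : ℕ} {n : WithTop ℤ} (hn : n ≤ 0)
    (hs : -(p : ℝ) < s.re) (hsk : s.re < k) (hM : 3 * p + 1 ≤ k + M)
    (hsing : n ≤ meromorphicOrderAt (mordellTornheimSingularTerm k) s)
    (htaylor : ∀ j, n ≤ meromorphicOrderAt (mordellTornheimTaylorTerm k j) s) :
    n ≤ meromorphicOrderAt (mordellTornheimExpansion k M) s := by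
  have hrem := analyticAt_mordellTornheimRemainder hs hsk hM
  have hmero (j : ℕ) := meromorphic_mordellTornheimTaylorTerm k j s
  have hsum := MeromorphicAt.fun_sum (s := Finset.range M) fun j _ => hmero j
  have hsing' := meromorphic_mordellTornheimSingularTerm k s
  exact le_meromorphicOrderAt_fun_add (hsing'.add hsum) hrem.meromorphicAt
    (le_meromorphicOrderAt_fun_add hsing' hsum hsing
      (le_meromorphicOrderAt_fun_sum _ (fun j _ => hmero j) fun j _ => htaylor j))
    (hn.trans hrem.meromorphicOrderAt_nonneg)

theorem meromorphicOrderAt_mordellTornheimExpansion_one_zero_nonneg {M : ℕ} (hM : 3 ≤ M) :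
    0 ≤ meromorphicOrderAt (mordellTornheimExpansion 1 M) 0 := by
  obtain ⟨m, rfl⟩ := Nat.exists_eq_add_of_le' (Nat.one_le_of_lt hM)
  have hrem : AnalyticAt ℂ (mordellTornheimRemainder 1 (m + 1)) 0 :=
    analyticAt_mordellTornheimRemainder (p := 1) (by norm_num) (by norm_num) (by lia)
  have hlead := (meromorphic_mordellTornheimSingularTerm 1 0).add
    (meromorphic_mordellTornheimTaylorTerm 1 0 0)
  have hmero (j : ℕ) := meromorphic_mordellTornheimTaylorTerm 1 (j + 1) 0
  have htail (j : ℕ) : 0 ≤ meromorphicOrderAt (mordellTornheimTaylorTerm 1 (j + 1)) 0 :=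
    meromorphicOrderAt_mordellTornheimTaylorTerm_nonneg_of_ne (by norm_num) (by
      rw [mul_zero, zero_add, Nat.cast_one, ne_eq, add_eq_left]
      exact Nat.cast_ne_zero.mpr j.succ_ne_zero)
  have hsum := MeromorphicAt.fun_sum (s := Finset.range m) fun j _ => hmero j
  refine (le_meromorphicOrderAt_fun_add (hlead.add hsum) hrem.meromorphicAt
    (le_meromorphicOrderAt_fun_add hlead hsum
      meromorphicOrderAt_mordellTornheimSingularTerm_add_taylorTerm_nonneg
      (le_meromorphicOrderAt_fun_sum _ (fun j _ => hmero j) fun j _ => htail j))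
    hrem.meromorphicOrderAt_nonneg).trans_eq
      (congrArg (meromorphicOrderAt · 0) (funext fun z => ?_))
  simp only [mordellTornheimExpansion, Finset.sum_range_succ', Pi.add_apply]
  ring

end ExpansionPoles

theorem isPreconnected_re_strip (a b : ℝ) : IsPreconnected {s : ℂ | a < s.re ∧ s.re < b} :=
  ((convex_halfSpace_re_gt a).inter (convex_halfSpace_re_lt b)).isPreconnected

/-- `F` is the meromorphic continuation to `ℂ` of `s ↦ zetaMT s (s - k) (2 * s + k)`. It is only
determined off a discrete set, as the values at the poles are arbitrary. -/
structure IsMordellTornheimContinuation (k : ℕ) (F : ℂ → ℂ) : Prop where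
  meromorphicOn : MeromorphicOn F univ
  eq_zetaMT (s : ℂ) (hs : 1 < s.re) : F s = zetaMT s (s - k) (2 * s + k)

namespace IsMordellTornheimContinuation

variable {k : ℕ} {F : ℂ → ℂ}

theorem eventuallyEq_zetaMT_line (hF : IsMordellTornheimContinuation k F) {s : ℂ}
    (hs : 1 / 2 < s.re) :
    F =ᶠ[𝓝[≠] s] fun z => zetaMT z (z - k) (2 * z + k) := by
  refine eventuallyEq_nhdsNE_of_meromorphicOn (U := {s : ℂ | 1 / 2 < s.re}) (x := 2)
    (convex_halfSpace_re_gt _).isPreconnected (hF.meromorphicOn.mono_set (subset_univ _))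
    (fun z hz => (analyticAt_zetaMT_line k hz).meromorphicAt) ?_ hs ?_
  · norm_num
  · have hopen : IsOpen {z : ℂ | 1 < z.re} := isOpen_lt continuous_const Complex.continuous_re
    exact ((hopen.eventually_mem (by norm_num)).mono hF.eq_zetaMT).filter_mono nhdsWithin_le_nhds

theorem eventuallyEq_mordellTornheimExpansion (hF : IsMordellTornheimContinuation k F) {M p : ℕ}
    {s : ℂ} (hs : -(p : ℝ) < s.re) (hsk : s.re < k) (hk : 1 ≤ k) (hM : 3 * p + 1 ≤ k + M) :
    F =ᶠ[𝓝[≠] s] mordellTornheimExpansion k M := by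
  have hk' : (1 : ℝ) ≤ k := by exact_mod_cast hk
  have hre : (7 / 8 : ℂ).re = 7 / 8 := by norm_num
  refine eventuallyEq_nhdsNE_of_meromorphicOn (x := 7 / 8) (isPreconnected_re_strip (-p) k)
    (hF.meromorphicOn.mono_set (subset_univ _)) (meromorphicOn_mordellTornheimExpansion hM)
    ⟨by linarith [p.cast_nonneg (α := ℝ)], by linarith⟩ ⟨hs, hsk⟩ ?_
  have hopen : IsOpen {z : ℂ | 2 / 3 < z.re ∧ z.re < k} :=
    (isOpen_lt continuous_const Complex.continuous_re).inter
      (isOpen_lt Complex.continuous_re continuous_const)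
  have hline : (fun z => zetaMT z (z - k) (2 * z + k)) =ᶠ[𝓝 (7 / 8)]
      mordellTornheimExpansion k M :=
    (hopen.eventually_mem ⟨by linarith, by linarith⟩).mono fun z hz =>
      zetaMT_line_eq_expansion M hz.1 hz.2
  exact (hF.eventuallyEq_zetaMT_line (by linarith)).trans (hline.filter_mono nhdsWithin_le_nhds)

theorem meromorphicOrderAt_eq_mordellTornheimExpansion (hF : IsMordellTornheimContinuation k F)
    {M p : ℕ} {s : ℂ} (hs : -(p : ℝ) < s.re) (hsk : s.re < k) (hk : 1 ≤ k)
    (hM : 3 * p + 1 ≤ k + M) :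
    meromorphicOrderAt F s = meromorphicOrderAt (mordellTornheimExpansion k M) s :=
  meromorphicOrderAt_congr (hF.eventuallyEq_mordellTornheimExpansion hs hsk hk hM)

theorem le_meromorphicOrderAt_of_one_le (hF : IsMordellTornheimContinuation k F) (hk : 1 ≤ k)
    (ℓ : ℕ) {n : WithTop ℤ} (hn : n ≤ 0)
    (hsing : n ≤ meromorphicOrderAt (mordellTornheimSingularTerm k) (-ℓ))
    (htaylor : ∀ j, n ≤ meromorphicOrderAt (mordellTornheimTaylorTerm k j) (-ℓ)) :
    n ≤ meromorphicOrderAt F (-ℓ) := by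
  have hs : -((ℓ + 1 : ℕ) : ℝ) < (-ℓ : ℂ).re := by
    simp only [Complex.neg_re, Complex.natCast_re, Nat.cast_succ]
    linarith
  have hsk : (-ℓ : ℂ).re < k := (neg_natCast_re_nonpos ℓ).trans_lt (by exact_mod_cast hk)
  have hM : 3 * (ℓ + 1) + 1 ≤ k + 3 * (ℓ + 1) := by lia
  rw [hF.meromorphicOrderAt_eq_mordellTornheimExpansion hs hsk hk hM]
  exact le_meromorphicOrderAt_mordellTornheimExpansion hn hs hsk hM hsing htaylor

theorem neg_one_le_meromorphicOrderAt_of_one_le (hF : IsMordellTornheimContinuation k F)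
    (hk : 1 ≤ k) (ℓ : ℕ) : -1 ≤ meromorphicOrderAt F (-ℓ) := by
  have hre := neg_natCast_re_nonpos ℓ
  exact hF.le_meromorphicOrderAt_of_one_le hk ℓ (by decide)
    (neg_one_le_meromorphicOrderAt_mordellTornheimSingularTerm (hre.trans_lt one_half_pos))
    fun j => neg_one_le_meromorphicOrderAt_mordellTornheimTaylorTerm j
      (hre.trans_lt k.cast_add_one_pos)

theorem meromorphicOrderAt_nonneg_of_one_le (hF : IsMordellTornheimContinuation k F) (hk : 1 ≤ k)
    {ℓ : ℕ} (hkl : k ≤ 2 * ℓ) : 0 ≤ meromorphicOrderAt F (-ℓ) :=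
  hF.le_meromorphicOrderAt_of_one_le hk ℓ le_rfl
    (meromorphicOrderAt_mordellTornheimSingularTerm_nonneg hkl)
    fun j => meromorphicOrderAt_mordellTornheimTaylorTerm_nonneg j hkl

theorem meromorphicOrderAt_nonneg_of_one (hF : IsMordellTornheimContinuation 1 F) (ℓ : ℕ) :
    0 ≤ meromorphicOrderAt F (-ℓ) := by
  rcases ℓ.eq_zero_or_pos with rfl | hl
  · rw [Nat.cast_zero, neg_zero, hF.meromorphicOrderAt_eq_mordellTornheimExpansion (M := 3)
      (p := 1) (by norm_num) (by norm_num) le_rfl (by lia)]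
    exact meromorphicOrderAt_mordellTornheimExpansion_one_zero_nonneg le_rfl
  · exact hF.meromorphicOrderAt_nonneg_of_one_le le_rfl (by lia)

theorem half_mul (hF : IsMordellTornheimContinuation 0 F) :
    IsMordellTornheimContinuation 1 (fun s => 2⁻¹ * F s) where
  meromorphicOn := (MeromorphicOn.const 2⁻¹).mul hF.meromorphicOn
  eq_zetaMT s hs := by
    rw [hF.eq_zetaMT s hs, Nat.cast_zero, sub_zero, add_zero, Nat.cast_one,
      zetaMT_line_zero (by linarith), inv_mul_cancel_left₀ two_ne_zero]

theorem meromorphicOrderAt_nonneg_of_zero (hF : IsMordellTornheimContinuation 0 F) (ℓ : ℕ) :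
    0 ≤ meromorphicOrderAt F (-ℓ) := by
  rw [← meromorphicOrderAt_mul_of_ne_zero analyticAt_const (inv_ne_zero (two_ne_zero (α := ℂ)))]
  exact hF.half_mul.meromorphicOrderAt_nonneg_of_one ℓ

theorem meromorphicOrderAt_nonneg_of_le_two_mul (hF : IsMordellTornheimContinuation k F) {ℓ : ℕ}
    (hkl : k ≤ 2 * ℓ) : 0 ≤ meromorphicOrderAt F (-ℓ) := by
  rcases k.eq_zero_or_pos with rfl | hk
  · exact hF.meromorphicOrderAt_nonneg_of_zero ℓ
  · exact hF.meromorphicOrderAt_nonneg_of_one_le hk hkl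

theorem meromorphicOrderAt_prod_mul_nonneg (hF : IsMordellTornheimContinuation k F) (ℓ : ℕ) :
    0 ≤ meromorphicOrderAt (fun s : ℂ => (∏ i ∈ Finset.range k, (s + i)) * F s) (-ℓ) := by
  have hprod : AnalyticAt ℂ (fun s : ℂ => ∏ i ∈ Finset.range k, (s + i)) (-ℓ) := by fun_prop
  have hmero := hF.meromorphicOn (-ℓ) (mem_univ _)
  simp only [mul_comm _ (F _)]
  rcases le_or_gt k (2 * ℓ) with hkl | hkl
  · exact le_meromorphicOrderAt_fun_mul hmero (hF.meromorphicOrderAt_nonneg_of_le_two_mul hkl) hprod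
  · have hmem : ℓ ∈ Finset.range k := Finset.mem_range.mpr (by lia)
    exact meromorphicOrderAt_fun_mul_nonneg_of_eq_zero hmero
      (hF.neg_one_le_meromorphicOrderAt_of_one_le (by lia) ℓ) hprod
      (Finset.prod_eq_zero hmem (neg_add_cancel _))

end IsMordellTornheimContinuation

theorem stmt18 (k : ℕ) (F : ℂ → ℂ)
    (hmero : MeromorphicOn F Set.univ)
    (hser : ∀ s : ℂ, 1 < s.re → F s = zetaMT s (s - k) (2 * s + k)) :
    (∀ ℓ : ℕ, ∃ G : ℂ → ℂ, AnalyticAt ℂ G (-(ℓ : ℂ)) ∧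
      (fun s => (∏ i ∈ Finset.range k, (s + (i : ℂ))) * F s) =ᶠ[𝓝[≠] (-(ℓ : ℂ))] G) ∧
    (∀ ℓ : ℕ, k ≤ 2 * ℓ → ∃ G : ℂ → ℂ, AnalyticAt ℂ G (-(ℓ : ℂ)) ∧
      F =ᶠ[𝓝[≠] (-(ℓ : ℂ))] G) := by
  have hF : IsMordellTornheimContinuation k F := ⟨hmero, hser⟩
  have hmero_at (ℓ : ℕ) : MeromorphicAt F (-ℓ) := hmero _ (mem_univ _)
  refine ⟨fun ℓ => ?_, fun ℓ hkl => ?_⟩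
  · exact (MeromorphicAt.meromorphicOrderAt_nonneg_iff (by fun_prop)).mp
      (hF.meromorphicOrderAt_prod_mul_nonneg ℓ)
  · exact (hmero_at ℓ).meromorphicOrderAt_nonneg_iff.mp
      (hF.meromorphicOrderAt_nonneg_of_le_two_mul hkl)
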